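/- arXiv:1310.7059 — 4 statements merged into one kernel-verified Lean document; each statement's English description precedes it below -/
import Mathlib

section
/- Fix integers n ≥ 1 and 0 ≤ k ≤ n. The total number of Condensed Catalan tableaux of size (k,n) (over all shapes λ contained in the k × (n−k) rectangle) equals the Narayana number (1/(n+1))·binom(n+1, k)·binom(n+1, k+1); equivalently, (n+1) times this number of tableaux equals binom(n+1, k)·binom(n+1, k+1). -/
open scoped Classical
open Finset

/-- A Condensed Catalan tableau with `k` rows inside a rectangle of width `w`,
of shape `lam`: cells are `none` (empty), `some true` (an α) or `some false` (a β). -/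
def IsCCT (k w : ℕ) (lam : Fin k → ℕ) (F : Fin k → Fin w → Option Bool) : Prop :=
  (∀ (i : Fin k) (c : Fin w), lam i ≤ (c : ℕ) → F i c = none) ∧
  (∀ (i : Fin k) (c c' : Fin w), F i c = some false → c' < c → F i c' = none) ∧
  (∀ (i i' : Fin k) (c : Fin w), F i c = some true → i' < i → F i' c = none) ∧
  (∀ (i : Fin k) (c : Fin w), (c : ℕ) < lam i →
    (∀ i' : Fin k, i < i' → F i' c ≠ some true) →
    (∀ c' : Fin w, c < c' → (c' : ℕ) < lam i → F i c' ≠ some false) →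
    F i c ≠ none)

/-- The number of α's in the filling. -/
def aCount (k w : ℕ) (F : Fin k → Fin w → Option Bool) : ℕ :=
  (Finset.univ.filter fun p : Fin k × Fin w => F p.1 p.2 = some true).card

/-- The number of β's in the filling. -/
def bCount (k w : ℕ) (F : Fin k → Fin w → Option Bool) : ℕ :=
  (Finset.univ.filter fun p : Fin k × Fin w => F p.1 p.2 = some false).card

/-- The binomial coefficient `binom a b` for integer arguments, with the convention
that it vanishes whenever `b < 0` or `b > a`. -/
def icho (a b : ℤ) : ℤ := if 0 ≤ b ∧ b ≤ a then ((a.toNat).choose b.toNat : ℤ) else 0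


/-!
Call a row restricted if it contains a β. A last row of length zero can be deleted without changing
anything else. If no row has length zero, the first column can be deleted, and it is determined by
what remains together with its number `b` of β's: the β's occupy the `b` lowest unrestricted rows,
and the next unrestricted row above them, if there is one, holds the α. So if `A k w g` counts the
tableaux with at most `g` restricted rows, then for `g ≤ k + 1`
`A (k + 1) (w + 1) g = A k (w + 1) g + ∑ h ≤ g, A (k + 1) w h`.
The hockey-stick identity shows that a 2 × 2 determinant of binomial coefficients satisfies the same
recurrence, and for `g = k` this determinant is a Narayana number.
-/

section Column

variable {ι : Type*} [LinearOrder ι] {R : Finset ι} {m : ι} {col : ι → Option Bool}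

/-- A filling of a single column that satisfies the tableau conditions when the rows in `R` are
those with no β further east; the rows are ordered from north to south. -/
def IsColumn (R : Finset ι) (col : ι → Option Bool) : Prop :=
  (∀ i ∉ R, col i = none) ∧
  (∀ i j, col j = some true → i < j → col i = none) ∧
  (∀ i ∈ R, (∀ j, i < j → col j ≠ some true) → col i ≠ none)

theorem isColumn_empty : IsColumn ∅ col ↔ col = fun _ => none := by
  constructor
  · exact fun h => funext fun i => h.1 i (notMem_empty i)
  · rintro rfl
    simp [IsColumn]

theorem isColumn_insert_max (hm : ∀ i ∈ R, i < m) :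
    IsColumn (insert m R) col ↔
      col = Function.update (fun _ => none) m (some true) ∨
        ∃ col', IsColumn R col' ∧ col = Function.update col' m (some false) := by
  constructor
  · rintro ⟨hout, hnorth, hfill⟩
    have hsouth : ∀ j, m < j → col j = none := fun j hj =>
      hout j (by simpa [hj.ne'] using fun hjR => (hm j hjR).not_gt hj)
    have hne : col m ≠ none := hfill m (mem_insert_self m R) fun j hj => by simp [hsouth j hj]
    rcases hcol : col m with _ | _ | _
    · exact absurd hcol hne
    · refine .inr ⟨Function.update col m none, ?_, by simp [← hcol]⟩
      refine ⟨fun i hi => ?_, fun i j => ?_, fun i hi => ?_⟩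
      all_goals grind [Function.update_apply]
    · refine .inl (funext fun i => ?_)
      grind [Function.update_apply]
  · rintro (rfl | ⟨col', ⟨hout, hnorth, hfill⟩, rfl⟩)
    all_goals
      refine ⟨fun i hi => ?_, fun i j => ?_, fun i hi => ?_⟩
      all_goals grind [Function.update_apply]

theorem card_filter_insert_update (hm : m ∉ R) (col : ι → Option Bool) :
    #{i ∈ insert m R | Function.update col m (some false) i = some false} =
      #{i ∈ R | col i = some false} + 1 := by
  rw [filter_insert, if_pos (Function.update_self ..), card_insert_of_notMem (by simp [hm])]
  congr 2
  exact filter_congr fun i hi => by rw [Function.update_of_ne (ne_of_mem_of_not_mem hi hm)]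

theorem existsUnique_isColumn (R : Finset ι) :
    ∀ b ≤ #R, ∃! col, IsColumn R col ∧ #{i ∈ R | col i = some false} = b := by
  induction R using Finset.induction_on_max with
  | empty =>
    intro b hb
    obtain rfl : b = 0 := by simpa using hb
    simp [isColumn_empty]
  | insert m R hm ih =>
    have hmR : m ∉ R := fun h => (hm m h).false
    rintro (_ | b) hb
    · refine ⟨Function.update (fun _ => none) m (some true),
        ⟨(isColumn_insert_max hm).2 (.inl rfl), ?_⟩, ?_⟩
      · simp [Function.update_apply]
      · rintro col ⟨hcol, hcard⟩
        refine ((isColumn_insert_max hm).1 hcol).resolve_right ?_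
        rintro ⟨col', -, rfl⟩
        simp [card_filter_insert_update hmR] at hcard
    · rw [card_insert_of_notMem hmR, Nat.add_le_add_iff_right] at hb
      obtain ⟨col, ⟨hcol, hcard⟩, huniq⟩ := ih b hb
      refine ⟨Function.update col m (some false),
        ⟨(isColumn_insert_max hm).2 (.inr ⟨col, hcol, rfl⟩), ?_⟩, ?_⟩
      · rw [card_filter_insert_update hmR, hcard]
      · rintro _ ⟨hins, hcard'⟩
        rcases (isColumn_insert_max hm).1 hins with rfl | ⟨col', hcol', rfl⟩
        · simp [Function.update_apply] at hcard'
        · rw [card_filter_insert_update hmR, Nat.add_right_cancel_iff] at hcard'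
          rw [huniq col' ⟨hcol', hcard'⟩]

end Column

section Tableau

variable {k w : ℕ}

/-- A filling of the `k × w` rectangle together with a shape, given by its `k` row lengths. -/
abbrev ShapedFilling (k w : ℕ) : Type :=
  (Fin k → Fin (w + 1)) × (Fin k → Fin w → Option Bool)

/-- The Condensed Catalan tableaux with `k` rows of length at most `w`, that is, of size
`(k, k + w)`. -/
noncomputable def tableaux (k w : ℕ) : Finset (ShapedFilling k w) :=
  {T | Antitone T.1 ∧ IsCCT k w (fun i => T.1 i) T.2}

theorem mem_tableaux {T : ShapedFilling k w} :
    T ∈ tableaux k w ↔ Antitone T.1 ∧ IsCCT k w (fun i => T.1 i) T.2 :=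
  mem_filter_univ T

/-- The restricted rows of a filling: those that contain a β. -/
noncomputable def betaRows (F : Fin k → Fin w → Option Bool) : Finset (Fin k) :=
  {i | ∃ c, F i c = some false}

theorem mem_betaRows {F : Fin k → Fin w → Option Bool} {i : Fin k} :
    i ∈ betaRows F ↔ ∃ c, F i c = some false :=
  mem_filter_univ i

/-- The number of Condensed Catalan tableaux with `k` rows of length at most `w`, at most `g` of
which are restricted. -/
noncomputable def tableauCount (k w g : ℕ) : ℕ :=
  #{T ∈ tableaux k w | #(betaRows T.2) ≤ g}

/-- The shaped filling with an additional last row of length zero. -/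
def appendRow (T : ShapedFilling k w) : ShapedFilling (k + 1) w :=
  (Fin.snoc T.1 0, Fin.snoc T.2 fun _ => none)

/-- The shaped filling with `col` as an additional first column, all rows becoming longer by one. -/
def prependColumn (col : Fin k → Option Bool) (T : ShapedFilling k w) : ShapedFilling k (w + 1) :=
  (fun i => (T.1 i).succ, fun i => Fin.cons (col i) (T.2 i))

theorem appendRow_injective : Function.Injective (appendRow : ShapedFilling k w → _) := by
  rintro ⟨l, F⟩ ⟨l', F'⟩ h
  simpa [appendRow, Fin.snoc_inj] using h

theorem prependColumn_injective2 :
    Function.Injective2 (prependColumn : _ → ShapedFilling k w → _) := by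
  rintro col col' ⟨l, F⟩ ⟨l', F'⟩ h
  simp only [prependColumn, Prod.mk.injEq, funext_iff, Fin.succ_inj, Fin.forall_fin_succ,
    Fin.cons_zero, Fin.cons_succ] at h
  exact ⟨funext fun i => (h.2 i).1, Prod.ext (funext h.1) (funext₂ fun i => (h.2 i).2)⟩

theorem exists_prependColumn_eq (T : ShapedFilling k (w + 1)) (hT : ∀ i, T.1 i ≠ 0) :
    ∃ col T', prependColumn col T' = T :=
  ⟨fun i => T.2 i 0, (fun i => (T.1 i).pred (hT i), fun i => Fin.tail (T.2 i)), by
    simp [prependColumn]⟩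

theorem isCCT_cons_iff (lam : Fin k → ℕ) (F : Fin k → Fin w → Option Bool)
    (col : Fin k → Option Bool) :
    IsCCT k (w + 1) (fun i => lam i + 1) (fun i => Fin.cons (col i) (F i)) ↔
      IsCCT k w lam F ∧ IsColumn (betaRows F)ᶜ col := by
  simp only [IsCCT, IsColumn, mem_compl, mem_betaRows, not_exists, not_forall, not_not,
    Fin.forall_fin_succ (n := w), Fin.cons_zero, Fin.cons_succ, Fin.val_zero, Fin.val_succ,
    Fin.succ_lt_succ_iff, Fin.succ_pos, Fin.not_lt_zero, Nat.add_le_add_iff_right,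
    Nat.add_lt_add_iff_right, Nat.le_zero, Nat.add_eq_zero_iff, one_ne_zero, and_false,
    Nat.zero_lt_succ, lt_self_iff_false, forall_const, false_imp_iff, imp_true_iff, true_and,
    and_true]
  constructor
  · rintro ⟨hshape, hwest, hnorth, hfill⟩
    refine ⟨⟨hshape, fun i c => (hwest i c).2, fun i j => (hnorth i j).2, fun i => (hfill i).2⟩,
      ?_, fun i j => (hnorth j i).1, fun i hi hsouth => (hfill i).1 hsouth fun c _ => hi c⟩
    rintro i ⟨c, hc⟩
    exact (hwest i c).1 hc
  · rintro ⟨⟨hshape, hwest, hnorth, hfill⟩, hout, hnorth₀, hfill₀⟩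
    refine ⟨hshape, fun i c => ⟨fun hc => hout i ⟨c, hc⟩, hwest i c⟩,
      fun i j => ⟨hnorth₀ j i, hnorth i j⟩,
      fun i => ⟨fun hsouth heast => hfill₀ i (fun c hc => ?_) hsouth, hfill i⟩⟩
    rcases lt_or_ge (c : ℕ) (lam i) with hlt | hge
    · exact heast c hlt hc
    · simp [hshape i c hge] at hc

theorem betaRows_appendRow (T : ShapedFilling k w) :
    betaRows (appendRow T).2 = (betaRows T.2).map Fin.castSuccEmb := by
  ext i
  refine Fin.lastCases ?_ (fun i => ?_) i
  · simp [mem_betaRows, appendRow]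
  · simp [mem_betaRows, appendRow]

theorem card_betaRows_prependColumn (col : Fin k → Option Bool) (T : ShapedFilling k w) :
    #(betaRows (prependColumn col T).2) =
      #(betaRows T.2) + #{i ∈ (betaRows T.2)ᶜ | col i = some false} := by
  rw [← card_union_of_disjoint]
  · congr 1
    ext i
    simp only [mem_betaRows, prependColumn, Fin.exists_fin_succ, Fin.cons_zero, Fin.cons_succ,
      mem_union, mem_filter, mem_compl]
    tauto
  · exact disjoint_compl_right.mono_right (filter_subset _ _)

theorem appendRow_mem_tableaux (T : ShapedFilling k w) :
    appendRow T ∈ tableaux (k + 1) w ↔ T ∈ tableaux k w := by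
  simp [mem_tableaux, appendRow, IsCCT, Antitone, Fin.forall_fin_succ', Fin.castSucc_lt_last,
    (Fin.castSucc_lt_last _).not_gt, (Fin.castSucc_lt_last _).not_ge]

theorem prependColumn_mem_tableaux (col : Fin k → Option Bool) (T : ShapedFilling k w) :
    prependColumn col T ∈ tableaux k (w + 1) ↔
      T ∈ tableaux k w ∧ IsColumn (betaRows T.2)ᶜ col := by
  simp [mem_tableaux, prependColumn, isCCT_cons_iff, Antitone, and_assoc]

theorem exists_appendRow_eq {T : ShapedFilling (k + 1) w} (hT : T ∈ tableaux (k + 1) w)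
    (hlast : T.1 (Fin.last k) = 0) : ∃ T', appendRow T' = T := by
  have hempty : T.2 (Fin.last k) = fun _ => none := by
    obtain ⟨-, hshape, -⟩ := mem_tableaux.1 hT
    exact funext fun c => hshape (Fin.last k) c (by simp [hlast])
  refine ⟨(Fin.init T.1, Fin.init T.2), ?_⟩
  simp [appendRow, ← hlast, ← hempty]

theorem tableaux_filter_last_eq_zero (k w b : ℕ) :
    {T ∈ tableaux (k + 1) w | #(betaRows T.2) = b ∧ T.1 (Fin.last k) = 0} =
      image appendRow {T ∈ tableaux k w | #(betaRows T.2) = b} := by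
  ext T
  simp only [mem_filter, mem_image]
  constructor
  · rintro ⟨hT, hcard, hlast⟩
    obtain ⟨T, rfl⟩ := exists_appendRow_eq hT hlast
    rw [betaRows_appendRow, card_map] at hcard
    exact ⟨T, ⟨(appendRow_mem_tableaux T).1 hT, hcard⟩, rfl⟩
  · rintro ⟨T, ⟨hT, hcard⟩, rfl⟩
    rw [betaRows_appendRow, card_map]
    exact ⟨(appendRow_mem_tableaux T).2 hT, hcard, by simp [appendRow]⟩

theorem card_tableaux_filter_forall_ne_zero {b : ℕ} (hb : b ≤ k) :
    #{T ∈ tableaux k (w + 1) | #(betaRows T.2) = b ∧ ∀ i, T.1 i ≠ 0} =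
      tableauCount k w b := by
  -- The difference is truncated for `T` with more than `b` restricted rows, which are not counted.
  have hcol (T : ShapedFilling k w) := existsUnique_isColumn (betaRows T.2)ᶜ (b - #(betaRows T.2))
    (by rw [card_compl, Fintype.card_fin]; omega)
  choose col hcol huniq using hcol
  rw [tableauCount, ← card_image_of_injective (f := fun T => prependColumn (col T) T) _
    fun T T' h => (prependColumn_injective2 h).2]
  congr 1
  ext T
  simp only [mem_filter, mem_image]
  constructor
  · rintro ⟨hT, hcard, hpos⟩
    obtain ⟨c, T, rfl⟩ := exists_prependColumn_eq T hpos
    obtain ⟨hT, hc⟩ := (prependColumn_mem_tableaux c T).1 hT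
    rw [card_betaRows_prependColumn] at hcard
    refine ⟨T, ⟨hT, by omega⟩, ?_⟩
    rw [huniq T c ⟨hc, by omega⟩]
  · rintro ⟨T, ⟨hT, hle⟩, rfl⟩
    refine ⟨(prependColumn_mem_tableaux _ T).2 ⟨hT, (hcol T).1⟩, ?_, fun i => Fin.succ_ne_zero _⟩
    rw [card_betaRows_prependColumn, (hcol T).2]
    omega

theorem card_tableaux_filter_betaRows_succ_succ {b : ℕ} (hb : b ≤ k + 1) :
    #{T ∈ tableaux (k + 1) (w + 1) | #(betaRows T.2) = b} =
      #{T ∈ tableaux k (w + 1) | #(betaRows T.2) = b} +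
        tableauCount (k + 1) w b := by
  rw [← card_filter_add_card_filter_not fun T => T.1 (Fin.last k) = 0, filter_filter, filter_filter,
    tableaux_filter_last_eq_zero, card_image_of_injective _ appendRow_injective,
    ← card_tableaux_filter_forall_ne_zero hb]
  congr 2
  refine filter_congr fun T hT => and_congr_right fun _ =>
    ⟨fun hlast i hi => hlast ?_, fun hpos => hpos (Fin.last k)⟩
  exact Fin.le_zero_iff.1 (hi ▸ (mem_tableaux.1 hT).1 (Fin.le_last i))

theorem tableauCount_eq_sum (k w g : ℕ) :
    tableauCount k w g = ∑ b ∈ range (g + 1), #{T ∈ tableaux k w | #(betaRows T.2) = b} := by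
  rw [tableauCount, card_eq_sum_card_fiberwise (f := fun T => #(betaRows T.2)) (t := range (g + 1))
    (by intro T; simp)]
  refine sum_congr rfl fun b hb => ?_
  rw [filter_filter]
  congr 1
  refine filter_congr fun T _ => and_iff_right_of_imp ?_
  grind

theorem tableauCount_succ_succ {g : ℕ} (hg : g ≤ k + 1) :
    tableauCount (k + 1) (w + 1) g =
      tableauCount k (w + 1) g + ∑ h ∈ range (g + 1), tableauCount (k + 1) w h := by
  rw [tableauCount_eq_sum, tableauCount_eq_sum, ← sum_add_distrib]
  exact sum_congr rfl fun b hb =>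
    card_tableaux_filter_betaRows_succ_succ ((mem_range_succ_iff.1 hb).trans hg)

theorem tableauCount_of_le {g : ℕ} (hg : k ≤ g) : tableauCount k w g = #(tableaux k w) := by
  rw [tableauCount, filter_true_of_mem]
  exact fun T _ => (card_finset_fin_le _).trans hg

theorem tableauCount_zero_left (w g : ℕ) : tableauCount 0 w g = 1 := by
  rw [tableauCount_of_le g.zero_le, tableaux, filter_true_of_mem]
  · simp
  · simp [IsCCT, Antitone]

theorem tableauCount_zero_right (k g : ℕ) : tableauCount k 0 g = 1 := by
  rw [tableauCount, tableaux, filter_filter, filter_true_of_mem]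
  · simp
  · simp [betaRows, IsCCT, Antitone]

end Tableau

section Narayana

/-- The `2 × 2` Lindström–Gessel–Viennot determinant of binomial coefficients that counts, for
`g ≤ k + 1`, the pairs of nonintersecting lattice paths from `(0, 0)` to `(w, k)` and from
`(-1, k + 1 - g)` to `(w - 1, k + 1)`. -/
def pathDet (k w g : ℕ) : ℤ :=
  (k + w).choose k * (g + w).choose w - (k + w).choose (k + 1) * (g + w).choose (w + 1)

theorem pathDet_zero_right (k g : ℕ) : pathDet k 0 g = 1 := by
  simp [pathDet]

theorem pathDet_self_succ (k w : ℕ) : pathDet k w (k + 1) = pathDet k w k := by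
  have hsymm : (k + 1 + w).choose w = (k + w).choose k + (k + w).choose (k + 1) := by
    rw [← Nat.choose_symm_add, Nat.add_right_comm, Nat.choose_succ_succ']
  have hpascal : (k + 1 + w).choose (w + 1) = (k + w).choose w + (k + w).choose (w + 1) := by
    rw [Nat.add_right_comm, Nat.choose_succ_succ']
  rw [pathDet, pathDet, hsymm, hpascal, Nat.choose_symm_add]
  push_cast
  ring

theorem sum_range_choose_succ (w g : ℕ) :
    ∑ h ∈ range (g + 1), (h + w).choose (w + 1) = (g + w + 1).choose (w + 2) := by
  induction g with
  | zero => simp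
  | succ g ih => rw [sum_range_succ, ih, Nat.add_right_comm g, Nat.choose_succ_succ', add_comm]

theorem pathDet_succ_succ (k w g : ℕ) :
    pathDet (k + 1) (w + 1) g =
      pathDet k (w + 1) g + ∑ h ∈ range (g + 1), pathDet (k + 1) w h := by
  have hsum : ∑ h ∈ range (g + 1), pathDet (k + 1) w h =
      (k + 1 + w).choose (k + 1) * (g + w + 1).choose (w + 1) -
        (k + 1 + w).choose (k + 2) * (g + w + 1).choose (w + 2) := by
    rw [← Nat.sum_range_add_choose, ← sum_range_choose_succ]
    push_cast
    rw [mul_sum, mul_sum, ← sum_sub_distrib]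
    rfl
  rw [hsum, pathDet, pathDet, ← Nat.add_assoc (k + 1), ← Nat.add_assoc k, ← Nat.add_assoc g,
    Nat.add_right_comm k 1, Nat.choose_succ_succ' _ k, Nat.choose_succ_succ' _ (k + 1)]
  push_cast
  ring

theorem succ_mul_pathDet_self (k w : ℕ) :
    (k + w + 1) * pathDet k w k = (k + w + 1).choose k * (k + w + 1).choose (k + 1) := by
  have hk : ((k + w).choose (k + 1) : ℤ) * (k + 1) = (k + w).choose k * w := by
    have := Nat.choose_succ_right_eq (k + w) k
    rw [Nat.add_sub_cancel_left] at this
    exact_mod_cast this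
  have hw : ((k + w).choose (w + 1) : ℤ) * (w + 1) = (k + w).choose k * k := by
    have := Nat.choose_succ_right_eq (k + w) w
    rw [Nat.add_sub_cancel, ← Nat.choose_symm_add] at this
    exact_mod_cast this
  have hsymm : (k + w + 1).choose k = (k + w).choose k + (k + w).choose (w + 1) := by
    rw [Nat.add_assoc, Nat.choose_symm_add, ← Nat.add_assoc, Nat.choose_succ_succ',
      Nat.choose_symm_add]
  rw [pathDet, hsymm, Nat.choose_succ_succ', ← Nat.choose_symm_add]
  push_cast
  generalize ((k + w).choose k : ℤ) = b at *
  linear_combination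
    -(b + (k + w).choose (w + 1)) * hk - (b + (k + w).choose (k + 1)) * hw

theorem tableauCount_eq_pathDet (w : ℕ) :
    ∀ k g, g ≤ k + 1 → (tableauCount k w g : ℤ) = pathDet k w g := by
  induction w with
  | zero =>
    intro k g _
    rw [tableauCount_zero_right, pathDet_zero_right, Nat.cast_one]
  | succ w ihw =>
    intro k
    induction k with
    | zero =>
      intro g hg
      rw [tableauCount_zero_left]
      rcases Nat.le_succ_iff.1 hg with hg | rfl
      · rw [Nat.le_zero.1 hg]
        simp [pathDet]
      · rw [pathDet_self_succ]
        simp [pathDet]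
    | succ k ihk =>
      have hle : ∀ g ≤ k + 1, (tableauCount (k + 1) (w + 1) g : ℤ) = pathDet (k + 1) (w + 1) g := by
        intro g hg
        rw [tableauCount_succ_succ hg, pathDet_succ_succ]
        push_cast
        rw [ihk g hg, sum_congr rfl fun h hh => ihw (k + 1) h (by grind)]
      intro g hg
      rcases Nat.le_succ_iff.1 hg with hg | rfl
      · exact hle g hg
      · rw [pathDet_self_succ, ← hle _ le_rfl, tableauCount_of_le (Nat.le_succ _),
          tableauCount_of_le le_rfl]

theorem succ_mul_card_tableaux (k w : ℕ) :
    (k + w + 1) * #(tableaux k w) = (k + w + 1).choose k * (k + w + 1).choose (k + 1) := by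
  rw [← tableauCount_of_le le_rfl]
  exact_mod_cast tableauCount_eq_pathDet w k k k.le_succ ▸ succ_mul_pathDet_self k w

end Narayana

/-- The number of Condensed Catalan tableaux of size `(k,n)` (over all shapes `lam`
contained in the `k × (n-k)` rectangle) is the Narayana number
`(1/(n+1))·binom(n+1,k)·binom(n+1,k+1)`; equivalently, `(n+1)` times this number of
tableaux equals `binom(n+1,k)·binom(n+1,k+1)`. -/
theorem stmt8 (n k : ℕ) (hn : 1 ≤ n) (hkn : k ≤ n) :
    (n + 1) *
        (Finset.univ.filter
          (fun pr : (Fin k → Fin (n - k + 1)) × (Fin k → Fin (n - k) → Option Bool) =>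
            (∀ i j : Fin k, i ≤ j → (pr.1 j : ℕ) ≤ (pr.1 i : ℕ)) ∧
            IsCCT k (n - k) (fun i => (pr.1 i : ℕ)) pr.2)).card
      = Nat.choose (n + 1) k * Nat.choose (n + 1) (k + 1) := by
  obtain ⟨w, rfl⟩ := Nat.exists_eq_add_of_le hkn
  rw [Nat.add_sub_cancel_left]
  exact succ_mul_card_tableaux k w
end

section
/- Fix an integer n ≥ 0. The total number of Condensed Catalan tableaux of size (k,n) summed over all 0 ≤ k ≤ n equals the Catalan number C_{n+1} = (1/(n+2))·binom(2n+2, n+1). -/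
open scoped Classical
open Finset

/-!
Follow the southeast border of the shape from its southwest end, remembering only the number `m` of
columns met so far that have no α. A step east raises `m` by one. A step north adds a row, which is
determined by the position of its β, if any: every open cell east of the β has an α. So exactly one
filling of the row leaves `j` of these columns without an α, for each `j ≤ m`. Hence the number
`T(n, m)` of completions by `n` border steps satisfies `T(n + 1, m) = ∑ j ≤ m + 1, T(n, j)`.

The `n`-th coefficient of `C ^ (m + 2)`, where `C = 1 + X * C ^ 2` is the Catalan series, satisfies
the same recursion, because summing a geometric series gives
`C ^ m = 1 + X * ∑ i < m, C ^ (i + 2)`. At `m = 0` this coefficient is the Catalan number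
`C_(n+1)`.
-/

section Row

variable {κ : Type*} [LinearOrder κ]

/-- A row of a tableau whose cells in `A` are those without an α to their south: such a cell is
empty exactly when there is a β to its east, and the cells outside `A` are empty. -/
def IsRowFilling (A : Finset κ) (r : κ → Option Bool) : Prop :=
  ∀ x, r x = none ↔ x ∉ A ∨ ∃ y, x < y ∧ r y = some false

lemma isRowFilling_empty_iff {r : κ → Option Bool} : IsRowFilling ∅ r ↔ r = fun _ => none := by
  simp +contextual [IsRowFilling, funext_iff, iff_def]

lemma isRowFilling_insert_iff {A : Finset κ} {a : κ} (ha : ∀ x ∈ A, x < a)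
    {r : κ → Option Bool} :
    IsRowFilling (insert a A) r ↔ r = Function.update (fun _ => none) a (some false) ∨
      ∃ r', IsRowFilling A r' ∧ Function.update r' a (some true) = r := by
  constructor
  · intro h
    have ne_none : r a ≠ none := by
      grind [IsRowFilling]
    cases hra : r a with
    | none => exact absurd hra ne_none
    | some b =>
      cases b with
      | false =>
        left
        ext1 x
        grind [IsRowFilling]
      | true =>
        refine .inr ⟨Function.update r a none, ?_, by simp [← hra]⟩
        intro x
        grind [IsRowFilling]
  · rintro (rfl | ⟨r', h, rfl⟩) x <;> grind [IsRowFilling]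

variable [Fintype κ]

lemma sum_isRowFilling {M : Type*} [AddCommMonoid M] (A : Finset κ) (g : ℕ → M) :
    ∑ r with IsRowFilling A r, g #{x ∈ A | r x ≠ some true} = ∑ j ∈ range (#A + 1), g j := by
  induction A using Finset.induction_on_max with
  | empty => simp [isRowFilling_empty_iff, filter_eq']
  | insert a A ha ih =>
    have haA : a ∉ A := fun h => (ha a h).false
    have rows : ({r | IsRowFilling (insert a A) r} : Finset (κ → Option Bool)) =
        insert (Function.update (fun _ => none) a (some false))
          (({r | IsRowFilling A r} : Finset _).image (Function.update · a (some true))) := by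
      ext r
      simp [isRowFilling_insert_iff ha]
    have card_beta : #{x ∈ insert a A | Function.update (fun _ => none) a (some false) x ≠
        some true} = #A + 1 := by
      rw [filter_true_of_mem (by grind), card_insert_of_notMem haA]
    have filter_alpha (r : κ → Option Bool) :
        {x ∈ insert a A | Function.update r a (some true) x ≠ some true} =
          {x ∈ A | r x ≠ some true} := by
      grind
    have beta_notMem : Function.update (fun _ => none) a (some false) ∉
        ({r | IsRowFilling A r} : Finset _).image (Function.update · a (some true)) := by
      rw [mem_image]
      rintro ⟨r, -, h⟩
      simpa using congrFun h a
    have update_injOn : Set.InjOn (fun r : κ → Option Bool => Function.update r a (some true))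
        ({r | IsRowFilling A r} : Finset _) := by
      intro r hr r' hr' h
      ext1 x
      have := congrFun h x
      rw [mem_coe, mem_filter] at hr hr'
      grind [IsRowFilling]
    rw [rows, sum_insert beta_notMem, sum_image update_injOn, card_beta,
      card_insert_of_notMem haA, sum_range_succ, add_comm, ← ih]
    simp_rw [filter_alpha]

end Row

lemma isCCT_iff {k w : ℕ} {lam : Fin k → ℕ} {F : Fin k → Fin w → Option Bool} :
    IsCCT k w lam F ↔ ∀ i x, F i x = none ↔
      lam i ≤ x ∨ (∃ i', i < i' ∧ F i' x = some true) ∨ ∃ y, x < y ∧ F i y = some false := by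
  constructor
  · rintro ⟨hout, hwest, hnorth, hfull⟩ i x
    grind
  · intro h
    refine ⟨?_, ?_, ?_, ?_⟩ <;> grind

/-- The cells of row `i` in the columns `U` that have no α to their south. -/
noncomputable def openCells {k w : ℕ} (U : Finset (Fin w)) (lam : Fin k → Fin (w + 1))
    (F : Fin k → Fin w → Option Bool) (i : Fin k) : Finset (Fin w) :=
  U.filter fun x => x.val < (lam i).val ∧ ∀ i', i < i' → F i' x ≠ some true

lemma openCells_last {k w : ℕ} (U : Finset (Fin w)) (lam : Fin (k + 1) → Fin (w + 1))
    (F : Fin (k + 1) → Fin w → Option Bool) :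
    openCells U lam F (Fin.last k) = U.filter (·.val < (lam (Fin.last k)).val) := by
  simp [openCells, Fin.le_last]

lemma openCells_castSucc {k w : ℕ} (U : Finset (Fin w)) (lam : Fin (k + 1) → Fin (w + 1))
    (F : Fin (k + 1) → Fin w → Option Bool) (i : Fin k) :
    openCells U lam F i.castSucc =
      openCells {x ∈ U | F (Fin.last k) x ≠ some true} (Fin.init lam) (Fin.init F) i := by
  simp only [openCells, Fin.forall_fin_succ', Fin.castSucc_lt_castSucc_iff, Fin.castSucc_lt_last,
    forall_const, Fin.init]
  grind

/-- The top `k` rows of a tableau: `c` is a lower bound for the lengths of the rows and `U` the set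
of columns having no α in the rows further south. -/
def IsUpperPart {k w : ℕ} (c : ℕ) (U : Finset (Fin w)) (lam : Fin k → Fin (w + 1))
    (F : Fin k → Fin w → Option Bool) : Prop :=
  Antitone lam ∧ (∀ i, c ≤ (lam i).val) ∧
    ∀ i, IsRowFilling (openCells U lam F i) (F i)

lemma isUpperPart_zero_univ_iff {k w : ℕ} {lam : Fin k → Fin (w + 1)}
    {F : Fin k → Fin w → Option Bool} :
    IsUpperPart 0 univ lam F ↔ Antitone lam ∧ IsCCT k w (fun i => lam i) F := by
  rw [IsUpperPart, isCCT_iff]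
  simp only [IsRowFilling, openCells]
  grind

lemma antitone_iff_init {α : Type*} [Preorder α] {k : ℕ} {f : Fin (k + 1) → α} :
    Antitone f ↔ Antitone (Fin.init f : Fin k → α) ∧
      ∀ i : Fin k, f (Fin.last k) ≤ f i.castSucc := by
  refine ⟨fun h => ⟨h.comp_monotone Fin.strictMono_castSucc.monotone, fun i => h (Fin.le_last _)⟩,
    fun ⟨hinit, hlast⟩ i j hij => ?_⟩
  induction j using Fin.lastCases with
  | last =>
    induction i using Fin.lastCases with
    | last => rfl
    | cast i => exact hlast i
  | cast j =>
    obtain ⟨i, rfl⟩ := Fin.exists_castSucc_eq.2 (hij.trans_lt (Fin.castSucc_lt_last j)).ne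
    exact hinit hij

lemma isUpperPart_iff_init {k w c : ℕ} {U : Finset (Fin w)} {lam : Fin (k + 1) → Fin (w + 1)}
    {F : Fin (k + 1) → Fin w → Option Bool} (hc : (lam (Fin.last k) : ℕ) = c) :
    IsUpperPart c U lam F ↔ IsRowFilling (U.filter (·.val < c)) (F (Fin.last k)) ∧
      IsUpperPart c {x ∈ U | F (Fin.last k) x ≠ some true} (Fin.init lam) (Fin.init F) := by
  subst hc
  simp only [IsUpperPart, antitone_iff_init, Fin.forall_fin_succ', openCells_last,
    openCells_castSucc, Fin.init]
  constructor <;> grind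

/-- The set of all pairs of shape and filling satisfying `IsUpperPart`. -/
noncomputable def upperParts (k : ℕ) {w : ℕ} (c : ℕ) (U : Finset (Fin w)) :
    Finset ((Fin k → Fin (w + 1)) × (Fin k → Fin w → Option Bool)) :=
  {p | IsUpperPart c U p.1 p.2}

lemma upperParts_eq_empty {k w c : ℕ} (hc : w < c) (U : Finset (Fin w)) :
    upperParts (k + 1) c U = ∅ :=
  filter_false_of_mem fun p _ h => ((h.2.1 0).trans_lt (p.1 0).isLt).not_ge hc

lemma card_upperParts_last_eq {k w c : ℕ} (hc : c ≤ w) (U : Finset (Fin w)) :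
    #{p ∈ upperParts (k + 1) c U | (p.1 (Fin.last k) : ℕ) = c} =
      ∑ r with IsRowFilling (U.filter (·.val < c)) r,
        #(upperParts k c {x ∈ U | r x ≠ some true}) := by
  rw [← card_sigma]
  refine card_nbij' (fun p => ⟨p.2 (Fin.last k), (Fin.init p.1, Fin.init p.2)⟩)
    (fun q => (Fin.snoc (α := fun _ => Fin (w + 1)) q.2.1 ⟨c, Nat.lt_succ_of_le hc⟩,
      Fin.snoc (α := fun _ => Fin w → Option Bool) q.2.2 q.1)) ?_ ?_ ?_ ?_
  · rintro ⟨lam, F⟩ h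
    obtain ⟨hp, hlast⟩ := mem_filter.1 h
    simpa [upperParts, isUpperPart_iff_init hlast] using hp
  · rintro ⟨r, lam, F⟩ h
    simp_all [upperParts, isUpperPart_iff_init]
  · rintro ⟨lam, F⟩ h
    obtain ⟨-, rfl⟩ := mem_filter.1 h
    simp
  · rintro ⟨r, lam, F⟩ -
    simp

lemma card_upperParts_succ {k w c : ℕ} (hc : c ≤ w) (U : Finset (Fin w)) :
    #(upperParts (k + 1) c U) = #(upperParts (k + 1) (c + 1) U) +
      ∑ r with IsRowFilling (U.filter (·.val < c)) r,
        #(upperParts k c {x ∈ U | r x ≠ some true}) := by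
  rw [← card_upperParts_last_eq hc, ← card_filter_add_card_filter_not
    (s := upperParts (k + 1) c U) (fun p => (p.1 (Fin.last k) : ℕ) = c), add_comm]
  congr 2
  ext ⟨lam, F⟩
  have last_le (h : Antitone lam) (i : Fin (k + 1)) : (lam (Fin.last k)).val ≤ (lam i).val :=
    h (Fin.le_last i)
  grind [upperParts, IsUpperPart]

/-- The number of ways to complete a tableau towards the northeast by `k` rows and `e` columns,
given the number `m` of columns so far without an α. Following the border of the shape, either
the next column begins, or there is a row to fill, leaving any number `j ≤ m` of these columns
without an α. -/
def numCompletions : ℕ → ℕ → ℕ → ℕ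
  | 0, _, _ => 1
  | k + 1, 0, m => ∑ j ∈ range (m + 1), numCompletions k 0 j
  | k + 1, e + 1, m =>
    numCompletions (k + 1) e (m + 1) + ∑ j ∈ range (m + 1), numCompletions k (e + 1) j

theorem card_upperParts (k : ℕ) {w c e : ℕ} (hw : c + e = w) {U : Finset (Fin w)}
    (hU : ∀ x : Fin w, c ≤ x → x ∈ U) :
    #(upperParts k c U) = numCompletions k e #(U.filter (·.val < c)) := by
  induction k generalizing c e U with
  | zero => simp [upperParts, IsUpperPart, numCompletions, Subsingleton.antitone]
  | succ k ihk =>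
    have sum_rows {c e : ℕ} (hw : c + e = w) {U : Finset (Fin w)}
        (hU : ∀ x : Fin w, c ≤ x → x ∈ U) :
        ∑ r with IsRowFilling (U.filter (·.val < c)) r,
          #(upperParts k c {x ∈ U | r x ≠ some true}) =
            ∑ j ∈ range (#(U.filter (·.val < c)) + 1), numCompletions k e j := by
      rw [← sum_isRowFilling]
      refine sum_congr rfl fun r hr => ?_
      rw [ihk hw, filter_comm]
      grind [IsRowFilling]
    induction e generalizing c U with
    | zero =>
      rw [card_upperParts_succ (by lia), sum_rows hw hU, upperParts_eq_empty (by lia), card_empty,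
        zero_add, numCompletions]
    | succ e ihe =>
      have card_filter_succ : #(U.filter (·.val < c + 1)) = #(U.filter (·.val < c)) + 1 := by
        have filter_succ : U.filter (·.val < c + 1) =
            insert ⟨c, by lia⟩ (U.filter (·.val < c)) := by
          grind
        rw [filter_succ, card_insert_of_notMem (by simp)]
      rw [card_upperParts_succ (by lia), sum_rows hw hU,
        ihe (by lia) (by grind), card_filter_succ, numCompletions]

lemma sum_antidiagonal_numCompletions_succ (n m : ℕ) :
    ∑ p ∈ antidiagonal (n + 1), numCompletions p.1 p.2 m =
      ∑ j ∈ range (m + 2), ∑ p ∈ antidiagonal n, numCompletions p.1 p.2 j := by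
  have split : ∀ p ∈ antidiagonal (n + 1), numCompletions p.1 p.2 m =
      (if p.2 = 0 then 0 else numCompletions p.1 (p.2 - 1) (m + 1)) +
        if p.1 = 0 then 0 else ∑ j ∈ range (m + 1), numCompletions (p.1 - 1) p.2 j := by
    rintro ⟨_ | k, _ | e⟩ h <;> simp_all [numCompletions]
  rw [sum_congr rfl split, sum_add_distrib, Nat.sum_antidiagonal_succ',
    Nat.sum_antidiagonal_succ, sum_range_succ _ (m + 1), sum_comm (s := range (m + 1))]
  simp [add_comm]

open PowerSeries in
lemma coeff_succ_catalanSeries_pow (n m : ℕ) :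
    coeff (n + 1) (catalanSeries ^ m) = ∑ j ∈ range m, coeff n (catalanSeries ^ (j + 2)) := by
  have geom := geom_sum_mul_add (catalanSeries ^ 2 * X) m
  rw [catalanSeries_sq_mul_X_add_one, ← mul_assoc, sum_mul] at geom
  simp_rw [← pow_add] at geom
  rw [← geom, map_add, coeff_succ_mul_X, map_sum, coeff_one, if_neg n.succ_ne_zero, add_zero]

theorem sum_antidiagonal_numCompletions (n m : ℕ) :
    ∑ p ∈ antidiagonal n, numCompletions p.1 p.2 m =
      PowerSeries.coeff n (PowerSeries.catalanSeries ^ (m + 2)) := by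
  induction n generalizing m with
  | zero => simp [numCompletions]
  | succ n ih =>
    rw [sum_antidiagonal_numCompletions_succ, coeff_succ_catalanSeries_pow]
    exact sum_congr rfl fun j _ => ih j

lemma coeff_catalanSeries_sq (n : ℕ) :
    PowerSeries.coeff n (PowerSeries.catalanSeries ^ 2) = catalan (n + 1) := by
  have h := coeff_succ_catalanSeries_pow n 1
  simpa using h.symm

/-- The total number of Condensed Catalan tableaux of size `(k,n)`, summed over all
`0 ≤ k ≤ n`, equals the Catalan number `C_(n+1)`. -/
theorem stmt9 (n : ℕ) :
    (∑ k ∈ Finset.range (n + 1),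
        (Finset.univ.filter
          (fun pr : (Fin k → Fin (n - k + 1)) × (Fin k → Fin (n - k) → Option Bool) =>
            (∀ i j : Fin k, i ≤ j → (pr.1 j : ℕ) ≤ (pr.1 i : ℕ)) ∧
            IsCCT k (n - k) (fun i => (pr.1 i : ℕ)) pr.2)).card)
      = catalan (n + 1) := by
  rw [← coeff_catalanSeries_sq, ← zero_add 2, ← sum_antidiagonal_numCompletions,
    Nat.sum_antidiagonal_eq_sum_range_succ (fun k e => numCompletions k e 0)]
  refine sum_congr rfl fun k _ => ?_
  have card_eq := card_upperParts k (Nat.zero_add (n - k)) (U := univ) fun x _ => mem_univ x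
  simp only [not_lt_zero, filter_false, card_empty] at card_eq
  rw [← card_eq, upperParts]
  simp_rw [isUpperPart_zero_univ_iff]
  rfl
end

section
/- Fix an integer n ≥ 1 and a word τ ∈ {•,∘}^n containing exactly k symbols •. There is a bijection between the set of (staircase) Catalan tableaux of size n and type τ and the set of Condensed Catalan tableaux of size (k,n) whose shape is λ(τ), where λ(τ)_j is the number of ∘'s strictly to the right of the j-th • in τ; under this bijection, the weight α^{a} β^{b} of a staircase tableau (a = total number of α's, b = total number of β's in its filling) equals the weight α^{k+j} β^{n−k+ℓ} of the corresponding condensed tableau (j = number of α's, ℓ = number of β's in the condensed filling). -/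
open scoped Classical
open Finset

/-- A (staircase) Catalan tableau of size `n`: a filling of the staircase Young
diagram `(n, n-1, …, 1)` (boxes `(i,c)` with `i + c < n`) by `none` (empty),
`some true` (α) or `some false` (β) such that: boxes outside the staircase are empty;
every diagonal box (`i + c = n - 1`) is nonempty; every box strictly west of a β in
its row is empty; every box strictly north of an α in its column is empty; and every
box with no α strictly south of it in its column and no β strictly east of it in its
row is nonempty. -/
def IsStair (n : ℕ) (G : Fin n → Fin n → Option Bool) : Prop :=
  (∀ i c : Fin n, n ≤ (i : ℕ) + (c : ℕ) → G i c = none) ∧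
  (∀ i c : Fin n, (i : ℕ) + (c : ℕ) = n - 1 → G i c ≠ none) ∧
  (∀ i c c' : Fin n, G i c = some false → c' < c → G i c' = none) ∧
  (∀ i i' c : Fin n, G i c = some true → i' < i → G i' c = none) ∧
  (∀ i c : Fin n, (i : ℕ) + (c : ℕ) < n →
    (∀ i' : Fin n, i < i' → (i' : ℕ) + (c : ℕ) < n → G i' c ≠ some true) →
    (∀ c' : Fin n, c < c' → (i : ℕ) + (c' : ℕ) < n → G i c' ≠ some false) →
    G i c ≠ none)

/-- The number of α's in a staircase filling. -/
def sACount (n : ℕ) (G : Fin n → Fin n → Option Bool) : ℕ :=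
  (Finset.univ.filter fun p : Fin n × Fin n => G p.1 p.2 = some true).card

/-- The number of β's in a staircase filling. -/
def sBCount (n : ℕ) (G : Fin n → Fin n → Option Bool) : ℕ :=
  (Finset.univ.filter fun p : Fin n × Fin n => G p.1 p.2 = some false).card

/-!
A diagonal β empties the rest of its row and a diagonal α the rest of its column, so a staircase
tableau of type `τ` is determined by its entries in the rows with a diagonal α and the columns with
a diagonal β; the boxes there form the diagram `λ(τ)`. Conversely, every condensed tableau extends:
no box of the staircase lies south or east of a diagonal box, so restoring the diagonal never
violates the α and β rules, and it allows the other boxes of the restored rows and columns to be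
empty. The diagonal accounts for the extra factor `α^k β^(n-k)`. All that matters is that the
prescribed entries sit at corners, so the bijection exists for any region and any of its corners.
-/

section Condensation

variable {R C R' C' : Type*}

/-- A filling of a region `D ⊆ R × C` obeying the Catalan tableau rules, common to staircase and
condensed tableaux: rows run southwards, columns run eastwards, `some true` is an α,
`some false` is a β and `none` an empty box, and boxes outside `D` are empty. -/
structure IsCatalanFilling [LT R] [LT C] (D : R → C → Prop) (F : R → C → Option Bool) : Prop where
  mem_of_eq_some : ∀ {i c b}, F i c = some b → D i c
  west_eq_none : ∀ {i c c'}, F i c = some false → c' < c → F i c' = none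
  north_eq_none : ∀ {i i' c}, F i c = some true → i' < i → F i' c = none
  ne_none : ∀ {i c}, D i c → (∀ i', i < i' → F i' c ≠ some true) →
    (∀ c', c < c' → F i c' ≠ some false) → F i c ≠ none

/-- A corner of the region `D`: a box of `D` with no box of `D` strictly south of it in its column
or strictly east of it in its row. -/
structure IsCornerBox [LT R] [LT C] (D : R → C → Prop) (i : R) (c : C) : Prop where
  mem : D i c
  notMem_south : ∀ {i'}, i < i' → ¬ D i' c
  notMem_east : ∀ {c'}, c < c' → ¬ D i c'

/-- `F` has the prescribed entries `κ`; a box where `κ` is `none` is unconstrained. -/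
def HasEntries (κ F : R → C → Option Bool) : Prop :=
  ∀ ⦃i c b⦄, κ i c = some b → F i c = some b

/-- The number of boxes of the filling `F` with entry `b`. -/
def entryCount [Fintype R] [Fintype C] (b : Bool) (F : R → C → Option Bool) : ℕ :=
  #{p : R × C | F p.1 p.2 = some b}

/-- The setting in which a region is condensed: `κ` prescribes the entries of some corners of `D`,
and `r`, `d` enumerate the rows without a prescribed β and the columns without a prescribed α. -/
structure IsCondensation [Preorder R] [Preorder C] [Preorder R'] [Preorder C']
    (D : R → C → Prop) (κ : R → C → Option Bool) (r : R' ↪o R) (d : C' ↪o C) : Prop where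
  isCornerBox : ∀ {i c b}, κ i c = some b → IsCornerBox D i c
  mem_range_row : ∀ {i}, i ∈ Set.range r ↔ ∀ c, κ i c ≠ some false
  mem_range_col : ∀ {c}, c ∈ Set.range d ↔ ∀ i, κ i c ≠ some true

/-- The filling of `R × C` with the prescribed entries `κ`, then the entries of `F` in the rows and
columns enumerated by `r` and `d`, and all other boxes empty. It undoes condensation. -/
noncomputable def extendFilling (κ : R → C → Option Bool) (r : R' → R) (d : C' → C)
    (F : R' → C' → Option Bool) (i : R) (c : C) : Option Bool :=
  (κ i c).or (Function.extend (Prod.map r d) (Function.uncurry F) (fun _ => none) (i, c))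

theorem hasEntries_extendFilling {κ : R → C → Option Bool} {r : R' → R} {d : C' → C}
    {F : R' → C' → Option Bool} : HasEntries κ (extendFilling κ r d F) := fun i c b hb => by
  rw [extendFilling, hb, Option.some_or]

theorem IsCatalanFilling.ne_none_of_isCornerBox [LT R] [LT C] {D : R → C → Prop}
    {F : R → C → Option Bool} (hF : IsCatalanFilling D F) {i : R} {c : C}
    (h : IsCornerBox D i c) : F i c ≠ none :=
  hF.ne_none h.mem (fun _ hi hα => h.notMem_south hi (hF.mem_of_eq_some hα))
    fun _ hc hβ => h.notMem_east hc (hF.mem_of_eq_some hβ)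

namespace IsCondensation

section Preorder

variable [Preorder R] [Preorder C] [Preorder R'] [Preorder C'] {D : R → C → Prop}
  {κ : R → C → Option Bool} {r : R' ↪o R} {d : C' ↪o C} {F : R' → C' → Option Bool}
  {G : R → C → Option Bool}

theorem exists_eq_false_of_notMem_range (h : IsCondensation D κ r d) {i : R}
    (hi : i ∉ Set.range r) : ∃ c, κ i c = some false := by
  simpa only [h.mem_range_row, not_forall, not_not] using hi

theorem exists_eq_true_of_notMem_range (h : IsCondensation D κ r d) {c : C}
    (hc : c ∉ Set.range d) : ∃ i, κ i c = some true := by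
  simpa only [h.mem_range_col, not_forall, not_not] using hc

theorem entry_apply_apply_eq_none (h : IsCondensation D κ r d) (j : R') (q : C') :
    κ (r j) (d q) = none := by
  have hβ : κ (r j) (d q) ≠ some false := h.mem_range_row.1 ⟨j, rfl⟩ _
  have hα : κ (r j) (d q) ≠ some true := h.mem_range_col.1 ⟨q, rfl⟩ _
  rcases hκ : κ (r j) (d q) with _ | _ | _
  · rfl
  · exact absurd hκ hβ
  · exact absurd hκ hα

theorem entry_eq_none_of_eq_true (h : IsCondensation D κ r d) (hκG : HasEntries κ G) {i : R}
    {q : C'} (hα : G i (d q) = some true) : κ i (d q) = none := by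
  refine Option.eq_none_iff_forall_ne_some.2 fun b hκ => ?_
  cases (hκG hκ).symm.trans hα
  exact h.mem_range_col.1 ⟨q, rfl⟩ i hκ

theorem entry_eq_none_of_eq_false (h : IsCondensation D κ r d) (hκG : HasEntries κ G) {j : R'}
    {c : C} (hβ : G (r j) c = some false) : κ (r j) c = none := by
  refine Option.eq_none_iff_forall_ne_some.2 fun b hκ => ?_
  cases (hκG hκ).symm.trans hβ
  exact h.mem_range_row.1 ⟨j, rfl⟩ c hκ

theorem extendFilling_apply_apply (h : IsCondensation D κ r d) (j : R') (q : C') :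
    extendFilling κ r d F (r j) (d q) = F j q := by
  rw [extendFilling, h.entry_apply_apply_eq_none, Option.none_or]
  exact (r.injective.prodMap d.injective).extend_apply _ _ (j, q)

theorem extendFilling_eq_some_iff (h : IsCondensation D κ r d) {i : R} {c : C} {b : Bool} :
    extendFilling κ r d F i c = some b ↔
      κ i c = some b ∨ ∃ j q, r j = i ∧ d q = c ∧ F j q = some b := by
  by_cases hp : ∃ j q, r j = i ∧ d q = c
  · obtain ⟨j, q, rfl, rfl⟩ := hp
    simp [h.extendFilling_apply_apply, h.entry_apply_apply_eq_none]
  · have hp' : ¬ ∃ p, Prod.map r d p = (i, c) := by simpa using hp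
    rw [extendFilling, Function.extend_apply' _ _ _ hp', Option.or_none]
    exact (or_iff_left fun ⟨j, q, hj, hq, _⟩ => hp ⟨j, q, hj, hq⟩).symm

theorem mem_of_extendFilling_eq_some (h : IsCondensation D κ r d)
    (hF : IsCatalanFilling (fun j q => D (r j) (d q)) F) {i : R} {c : C} {b : Bool}
    (hb : extendFilling κ r d F i c = some b) : D i c := by
  rcases h.extendFilling_eq_some_iff.1 hb with hκ | ⟨j, q, rfl, rfl, hFb⟩
  exacts [(h.isCornerBox hκ).mem, hF.mem_of_eq_some hFb]

theorem extendFilling_west_eq_none (h : IsCondensation D κ r d)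
    (hF : IsCatalanFilling (fun j q => D (r j) (d q)) F) {i : R} {c c' : C}
    (hβ : extendFilling κ r d F i c = some false) (hlt : c' < c) :
    extendFilling κ r d F i c' = none := by
  refine Option.eq_none_iff_forall_ne_some.2 fun b hb => ?_
  rcases h.extendFilling_eq_some_iff.1 hb with hκ | ⟨j, q', rfl, rfl, hFb⟩
  · exact (h.isCornerBox hκ).notMem_east hlt (h.mem_of_extendFilling_eq_some hF hβ)
  rcases h.extendFilling_eq_some_iff.1 hβ with hκ | ⟨j', q, hj, rfl, hFβ⟩
  · exact h.mem_range_row.1 ⟨j, rfl⟩ c hκ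
  · obtain rfl := r.injective hj
    simp [hF.west_eq_none hFβ (d.lt_iff_lt.1 hlt)] at hFb

theorem extendFilling_north_eq_none (h : IsCondensation D κ r d)
    (hF : IsCatalanFilling (fun j q => D (r j) (d q)) F) {i i' : R} {c : C}
    (hα : extendFilling κ r d F i c = some true) (hlt : i' < i) :
    extendFilling κ r d F i' c = none := by
  refine Option.eq_none_iff_forall_ne_some.2 fun b hb => ?_
  rcases h.extendFilling_eq_some_iff.1 hb with hκ | ⟨j', q, rfl, rfl, hFb⟩
  · exact (h.isCornerBox hκ).notMem_south hlt (h.mem_of_extendFilling_eq_some hF hα)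
  rcases h.extendFilling_eq_some_iff.1 hα with hκ | ⟨j, q', rfl, hq, hFα⟩
  · exact h.mem_range_col.1 ⟨q, rfl⟩ i hκ
  · obtain rfl := d.injective hq
    simp [hF.north_eq_none hFα (r.lt_iff_lt.1 hlt)] at hFb

theorem entryCount_extendFilling [Fintype R] [Fintype C] [Fintype R'] [Fintype C']
    (h : IsCondensation D κ r d) (F : R' → C' → Option Bool) (b : Bool) :
    entryCount b (extendFilling κ r d F) = entryCount b κ + entryCount b F := by
  have hsplit : ({p : R × C | extendFilling κ r d F p.1 p.2 = some b} : Finset (R × C)) =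
      ({p : R × C | κ p.1 p.2 = some b} : Finset (R × C)) ∪
        ({p : R' × C' | F p.1 p.2 = some b} : Finset (R' × C')).map
          (r.toEmbedding.prodMap d.toEmbedding) := by
    ext ⟨i, c⟩
    simp [h.extendFilling_eq_some_iff, and_comm, and_left_comm]
  have hdisj : Disjoint ({p : R × C | κ p.1 p.2 = some b} : Finset (R × C))
      (({p : R' × C' | F p.1 p.2 = some b} : Finset (R' × C')).map
        (r.toEmbedding.prodMap d.toEmbedding)) := by
    simp only [Finset.disjoint_right, mem_map, forall_exists_index, and_imp]
    rintro _ p - rfl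
    simp [h.entry_apply_apply_eq_none]
  rw [entryCount, hsplit, card_union_of_disjoint hdisj, card_map, entryCount, entryCount]

end Preorder

section LinearOrder

variable [LinearOrder R] [LinearOrder C] [Preorder R'] [Preorder C'] {D : R → C → Prop}
  {κ : R → C → Option Bool} {r : R' ↪o R} {d : C' ↪o C} {F : R' → C' → Option Bool}
  {G : R → C → Option Bool}

theorem col_lt_of_mem (h : IsCondensation D κ r d) {i : R} {c c₀ : C} {b : Bool}
    (h₀ : κ i c₀ = some b) (hκ : κ i c = none) (hD : D i c) : c < c₀ := by
  refine (not_lt.1 fun hlt => (h.isCornerBox h₀).notMem_east hlt hD).lt_of_ne ?_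
  rintro rfl
  simp [h₀] at hκ

theorem row_lt_of_mem (h : IsCondensation D κ r d) {i i₀ : R} {c : C} {b : Bool}
    (h₀ : κ i₀ c = some b) (hκ : κ i c = none) (hD : D i c) : i < i₀ := by
  refine (not_lt.1 fun hlt => (h.isCornerBox h₀).notMem_south hlt hD).lt_of_ne ?_
  rintro rfl
  simp [h₀] at hκ

theorem mem_range_of_eq_some (h : IsCondensation D κ r d) (hG : IsCatalanFilling D G)
    (hκG : HasEntries κ G) {i : R} {c : C} {b : Bool} (hb : G i c = some b) (hκ : κ i c = none) :
    i ∈ Set.range r ∧ c ∈ Set.range d := by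
  have hD : D i c := hG.mem_of_eq_some hb
  constructor <;> by_contra hout
  · obtain ⟨c₀, hβ⟩ := h.exists_eq_false_of_notMem_range hout
    simp [hG.west_eq_none (hκG hβ) (h.col_lt_of_mem hβ hκ hD)] at hb
  · obtain ⟨i₀, hα⟩ := h.exists_eq_true_of_notMem_range hout
    simp [hG.north_eq_none (hκG hα) (h.row_lt_of_mem hα hκ hD)] at hb

theorem extendFilling_restrict (h : IsCondensation D κ r d) (hG : IsCatalanFilling D G)
    (hκG : HasEntries κ G) : extendFilling κ r d (fun j q => G (r j) (d q)) = G := by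
  ext i c b
  rw [h.extendFilling_eq_some_iff]
  constructor
  · rintro (hκ | ⟨j, q, rfl, rfl, hb⟩)
    exacts [hκG hκ, hb]
  · intro hb
    rcases hκ : κ i c with _ | b'
    · obtain ⟨⟨j, rfl⟩, ⟨q, rfl⟩⟩ := h.mem_range_of_eq_some hG hκG hb hκ
      exact .inr ⟨j, q, rfl, rfl, hb⟩
    · exact .inl ((hκG hκ).symm.trans hb)

theorem isCatalanFilling_restrict (h : IsCondensation D κ r d) (hG : IsCatalanFilling D G)
    (hκG : HasEntries κ G) :
    IsCatalanFilling (fun j q => D (r j) (d q)) (fun j q => G (r j) (d q)) where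
  mem_of_eq_some := hG.mem_of_eq_some
  west_eq_none hβ hlt := hG.west_eq_none hβ (d.lt_iff_lt.2 hlt)
  north_eq_none hα hlt := hG.north_eq_none hα (r.lt_iff_lt.2 hlt)
  ne_none hD hα hβ := by
    refine hG.ne_none hD (fun i hi hGα => ?_) fun c hc hGβ => ?_
    · obtain ⟨⟨j', rfl⟩, -⟩ :=
        h.mem_range_of_eq_some hG hκG hGα (h.entry_eq_none_of_eq_true hκG hGα)
      exact hα j' (r.lt_iff_lt.1 hi) hGα
    · obtain ⟨-, ⟨q', rfl⟩⟩ :=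
        h.mem_range_of_eq_some hG hκG hGβ (h.entry_eq_none_of_eq_false hκG hGβ)
      exact hβ q' (d.lt_iff_lt.1 hc) hGβ

theorem extendFilling_ne_none (h : IsCondensation D κ r d)
    (hF : IsCatalanFilling (fun j q => D (r j) (d q)) F) {i : R} {c : C} (hD : D i c)
    (hα : ∀ i', i < i' → extendFilling κ r d F i' c ≠ some true)
    (hβ : ∀ c', c < c' → extendFilling κ r d F i c' ≠ some false) :
    extendFilling κ r d F i c ≠ none := by
  rcases hκ : κ i c with _ | b
  · have hi : i ∈ Set.range r := by
      by_contra hi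
      obtain ⟨c₀, h₀⟩ := h.exists_eq_false_of_notMem_range hi
      exact hβ c₀ (h.col_lt_of_mem h₀ hκ hD) (hasEntries_extendFilling h₀)
    have hc : c ∈ Set.range d := by
      by_contra hc
      obtain ⟨i₀, h₀⟩ := h.exists_eq_true_of_notMem_range hc
      exact hα i₀ (h.row_lt_of_mem h₀ hκ hD) (hasEntries_extendFilling h₀)
    obtain ⟨j, rfl⟩ := hi
    obtain ⟨q, rfl⟩ := hc
    rw [h.extendFilling_apply_apply]
    refine hF.ne_none hD (fun j' hj => ?_) fun q' hq => ?_
    · simpa only [h.extendFilling_apply_apply] using hα (r j') (r.lt_iff_lt.2 hj)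
    · simpa only [h.extendFilling_apply_apply] using hβ (d q') (d.lt_iff_lt.2 hq)
  · rw [hasEntries_extendFilling hκ]
    exact Option.some_ne_none b

theorem isCatalanFilling_extendFilling (h : IsCondensation D κ r d)
    (hF : IsCatalanFilling (fun j q => D (r j) (d q)) F) :
    IsCatalanFilling D (extendFilling κ r d F) where
  mem_of_eq_some := h.mem_of_extendFilling_eq_some hF
  west_eq_none := h.extendFilling_west_eq_none hF
  north_eq_none := h.extendFilling_north_eq_none hF
  ne_none := h.extendFilling_ne_none hF

/-- Condensation of tableaux: restricting a Catalan filling with prescribed corner entries `κ` to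
the rows and columns enumerated by `r` and `d`. -/
noncomputable def fillingEquiv (h : IsCondensation D κ r d) :
    {G // IsCatalanFilling D G ∧ HasEntries κ G} ≃
      {F // IsCatalanFilling (fun j q => D (r j) (d q)) F} where
  toFun G := ⟨fun j q => G.1 (r j) (d q), h.isCatalanFilling_restrict G.2.1 G.2.2⟩
  invFun F := ⟨extendFilling κ r d F.1, h.isCatalanFilling_extendFilling F.2,
    hasEntries_extendFilling⟩
  left_inv G := Subtype.ext (h.extendFilling_restrict G.2.1 G.2.2)
  right_inv _ := Subtype.ext (funext₂ fun _ _ => h.extendFilling_apply_apply _ _)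

theorem entryCount_fillingEquiv [Fintype R] [Fintype C] [Fintype R'] [Fintype C']
    (h : IsCondensation D κ r d)
    (G : {G // IsCatalanFilling D G ∧ HasEntries κ G}) (b : Bool) :
    entryCount b G.1 = entryCount b κ + entryCount b (h.fillingEquiv G).1 := by
  rw [← h.entryCount_extendFilling]
  exact congrArg (fun G' => entryCount b G'.1) (h.fillingEquiv.symm_apply_apply G).symm

end LinearOrder

end IsCondensation

end Condensation

section Staircase

variable {n k w : ℕ}

/-- The staircase Young diagram `(n, n - 1, …, 1)`. -/
def staircase (n : ℕ) (i c : Fin n) : Prop :=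
  (i : ℕ) + c < n

/-- The entries `τ` written along the diagonal of the staircase; the diagonal box of row `i` is in
column `i.rev`. -/
def diagonalEntries (τ : Fin n → Bool) (i c : Fin n) : Option Bool :=
  if c = i.rev then some (τ i) else none

theorem diagonalEntries_eq_some_iff {τ : Fin n → Bool} {i c : Fin n} {b : Bool} :
    diagonalEntries τ i c = some b ↔ c = i.rev ∧ τ i = b := by
  simp [diagonalEntries]

theorem staircase_iff_le_rev {i c : Fin n} : staircase n i c ↔ c ≤ i.rev := by
  rw [staircase, Fin.le_def, Fin.val_rev]
  omega

theorem isCornerBox_staircase (i : Fin n) : IsCornerBox (staircase n) i i.rev where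
  mem := staircase_iff_le_rev.2 le_rfl
  notMem_south hlt hmem := (Fin.rev_le_rev.1 (staircase_iff_le_rev.1 hmem)).not_gt hlt
  notMem_east hlt hmem := (staircase_iff_le_rev.1 hmem).not_gt hlt

theorem isStair_iff {G : Fin n → Fin n → Option Bool} :
    IsStair n G ↔ IsCatalanFilling (staircase n) G := by
  constructor
  · rintro ⟨hout, -, hwest, hnorth, hfull⟩
    have hmem {i c b} (hb : G i c = some b) : staircase n i c := by
      by_contra hD
      simp [hout i c (not_lt.1 hD)] at hb
    exact ⟨hmem, hwest _ _ _, hnorth _ _ _, fun hD hα hβ =>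
      hfull _ _ hD (fun i' hi _ => hα i' hi) fun c' hc _ => hβ c' hc⟩
  · intro hG
    refine ⟨fun i c hout => ?_, fun i c hdiag => ?_, fun _ _ _ => hG.west_eq_none,
      fun _ _ _ => hG.north_eq_none, fun i c hD hα hβ => ?_⟩
    · exact Option.eq_none_iff_forall_ne_some.2 fun b hb => hout.not_gt (hG.mem_of_eq_some hb)
    · obtain rfl : c = i.rev := Fin.ext (by rw [Fin.val_rev]; omega)
      exact hG.ne_none_of_isCornerBox (isCornerBox_staircase i)
    · exact hG.ne_none hD (fun i' hi h => hα i' hi (hG.mem_of_eq_some h) h)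
        fun c' hc h => hβ c' hc (hG.mem_of_eq_some h) h

theorem isCCT_iff_s13 {lam : Fin k → ℕ} {F : Fin k → Fin w → Option Bool} :
    IsCCT k w lam F ↔ IsCatalanFilling (fun j (q : Fin w) => (q : ℕ) < lam j) F := by
  constructor
  · rintro ⟨hout, hwest, hnorth, hfull⟩
    have hmem {j q b} (hb : F j q = some b) : (q : ℕ) < lam j := by
      by_contra hD
      simp [hout j q (not_lt.1 hD)] at hb
    exact ⟨hmem, hwest _ _ _, hnorth _ _ _, fun hD hα hβ =>
      hfull _ _ hD hα fun q' hq _ => hβ q' hq⟩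
  · intro hF
    refine ⟨fun j q hout => ?_, fun _ _ _ => hF.west_eq_none, fun _ _ _ => hF.north_eq_none,
      fun j q hD hα hβ => ?_⟩
    · exact Option.eq_none_iff_forall_ne_some.2 fun b hb => hout.not_gt (hF.mem_of_eq_some hb)
    · exact hF.ne_none hD hα fun q' hq h => hβ q' hq (hF.mem_of_eq_some h) h

theorem hasEntries_diagonalEntries_iff {τ : Fin n → Bool} {G : Fin n → Fin n → Option Bool} :
    HasEntries (diagonalEntries τ) G ↔ ∀ i, G i i.rev = some (τ i) := by
  simp only [HasEntries, diagonalEntries_eq_some_iff]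
  exact ⟨fun h i => h ⟨rfl, rfl⟩, by rintro h i _ _ ⟨rfl, rfl⟩; exact h i⟩

theorem isStair_and_type_iff {τ : Fin n → Bool} {G : Fin n → Fin n → Option Bool} :
    (IsStair n G ∧ ∀ i : Fin n, G i ⟨n - 1 - (i : ℕ), by omega⟩ =
        (if τ i = true then some true else some false)) ↔
      IsCatalanFilling (staircase n) G ∧ HasEntries (diagonalEntries τ) G := by
  have hcol (i : Fin n) : (⟨n - 1 - (i : ℕ), by omega⟩ : Fin n) = i.rev :=
    Fin.ext (by rw [Fin.val_rev]; dsimp only; omega)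
  have hentry (i : Fin n) : (if τ i = true then some true else some false) = some (τ i) := by
    cases τ i <;> rfl
  simp only [isStair_iff, hasEntries_diagonalEntries_iff, hcol, hentry]

theorem entryCount_diagonalEntries (τ : Fin n → Bool) (b : Bool) :
    entryCount b (diagonalEntries τ) = #{i | τ i = b} := by
  symm
  refine card_nbij' (fun i => (i, i.rev)) Prod.fst ?_ ?_ ?_ ?_ <;>
    simp +contextual [Set.MapsTo, Set.LeftInvOn, diagonalEntries_eq_some_iff]

theorem isCondensation_staircase {τ : Fin n → Bool} {r : Fin k ↪o Fin n} {d : Fin w ↪o Fin n}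
    (hr : Set.range r = {i | τ i = true}) (hd : Set.range d = {c | τ c.rev = false}) :
    IsCondensation (staircase n) (diagonalEntries τ) r d where
  isCornerBox {i c b} hκ := by
    obtain ⟨rfl, -⟩ := diagonalEntries_eq_some_iff.1 hκ
    exact isCornerBox_staircase i
  mem_range_row {i} := by simp [hr, diagonalEntries_eq_some_iff]
  mem_range_col {c} := by simp [hd, diagonalEntries_eq_some_iff, ← Fin.rev_eq_iff]

theorem card_filter_eq_false {ι : Type*} [Fintype ι] (τ : ι → Bool) :
    #{i | τ i = false} = Fintype.card ι - #{i | τ i = true} := by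
  have hsum := card_filter_add_card_filter_not (s := univ) (τ · = true)
  simp only [Bool.not_eq_true, card_univ] at hsum
  omega

theorem card_filter_rev (P : Fin n → Prop) [DecidablePred P] :
    #{c : Fin n | P c.rev} = #{i | P i} :=
  card_equiv Fin.revPerm fun c => by simp

theorem val_lt_card_iff_mem {A : Finset (Fin w)} (hA : IsLowerSet (A : Set (Fin w))) {q : Fin w} :
    (q : ℕ) < #A ↔ q ∈ A := by
  rcases hA.eq_univ_or_Iio with hA | ⟨a, hA⟩
  · obtain rfl : A = univ := coe_eq_univ.1 hA
    simp
  · obtain rfl : A = Iio a := coe_injective (hA.trans (coe_Iio a).symm)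
    simp

theorem val_lt_card_filter_lt_iff {α : Type*} [LinearOrder α] {S : Finset α} (hS : #S = w)
    {x : α} {q : Fin w} : (q : ℕ) < #{c ∈ S | c < x} ↔ S.orderEmbOfFin hS q < x := by
  have hcard : #{c ∈ S | c < x} = #{q | S.orderEmbOfFin hS q < x} := by
    conv_lhs => rw [← map_orderEmbOfFin_univ S hS, filter_map, card_map]
    rfl
  rw [hcard, val_lt_card_iff_mem]
  · simp
  · intro a b hba ha
    simp only [coe_filter, mem_univ, true_and, Set.mem_ofPred_eq] at ha ⊢
    exact ((S.orderEmbOfFin hS).monotone hba).trans_lt ha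

theorem staircase_orderEmbOfFin_iff {τ : Fin n → Bool} (hw : #{c : Fin n | τ c.rev = false} = w)
    {i : Fin n} (hi : τ i = true) {q : Fin w} :
    staircase n i (orderEmbOfFin _ hw q) ↔ (q : ℕ) < #{p | τ p = false ∧ i < p} := by
  have hmem : τ (orderEmbOfFin _ hw q).rev = false :=
    (mem_filter.1 (orderEmbOfFin_mem _ hw q)).2
  have hne : orderEmbOfFin _ hw q ≠ i.rev := fun h => by simp [h, hi] at hmem
  rw [staircase_iff_le_rev, hne.le_iff_lt, ← val_lt_card_filter_lt_iff hw, filter_filter,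
    ← card_filter_rev fun p => τ p = false ∧ i < p]
  simp only [Fin.lt_rev_iff]

theorem isCCT_shape_iff {τ : Fin n → Bool} (hk : #{i | τ i = true} = k)
    (hw : #{c : Fin n | τ c.rev = false} = w) {F : Fin k → Fin w → Option Bool} :
    IsCCT k w (fun j => #{p | τ p = false ∧ orderEmbOfFin _ hk j < p}) F ↔
      IsCatalanFilling
        (fun j q => staircase n (orderEmbOfFin _ hk j) (orderEmbOfFin _ hw q)) F := by
  have hmem (j : Fin k) : τ (orderEmbOfFin _ hk j) = true :=
    (mem_filter.1 (orderEmbOfFin_mem _ hk j)).2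
  simp only [isCCT_iff_s13, staircase_orderEmbOfFin_iff hw (hmem _)]

end Staircase

/-- There is a bijection between staircase Catalan tableaux of size `n` and type `τ`
(where `τ i = true` means the diagonal entry of row `i` is an α, i.e. a `•`) and
Condensed Catalan tableaux of size `(k,n)` of shape `λ(τ)`, where `λ(τ) j` is the
number of `∘`'s strictly to the right of the `j`-th `•` of `τ`; under it, the weight
`α^a β^b` of the staircase tableau equals the weight `α^(k+j) β^(n-k+ℓ)` of the
corresponding condensed tableau. Here `α = X 0`, `β = X 1` in `ℤ[α,β]`. -/
theorem stmt13 (n k : ℕ) (hn : 1 ≤ n) (τ : Fin n → Bool)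
    (hk : (Finset.univ.filter fun p => τ p = true).card = k) :
    ∃ e : {G : Fin n → Fin n → Option Bool //
            IsStair n G ∧ ∀ i : Fin n,
              G i ⟨n - 1 - (i : ℕ), by omega⟩ =
                (if τ i = true then some true else some false)} ≃
          {F : Fin k → Fin (n - k) → Option Bool //
            IsCCT k (n - k)
              (fun j => (Finset.univ.filter fun p : Fin n =>
                τ p = false ∧
                  (((Finset.univ.filter fun q => τ q = true).orderIsoOfFin hk j : Fin n)
                    < p)).card) F},
      ∀ T, (MvPolynomial.X 0 : MvPolynomial (Fin 2) ℤ) ^ sACount n T.1 *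
             MvPolynomial.X 1 ^ sBCount n T.1
          = MvPolynomial.X 0 ^ (k + aCount k (n - k) (e T).1) *
              MvPolynomial.X 1 ^ ((n - k) + bCount k (n - k) (e T).1) := by
  have hfalse : #{i | τ i = false} = n - k := by
    rw [card_filter_eq_false, hk, Fintype.card_fin]
  have hw : #{c : Fin n | τ c.rev = false} = n - k := (card_filter_rev (τ · = false)).trans hfalse
  have h : IsCondensation (staircase n) (diagonalEntries τ) (orderEmbOfFin _ hk)
      (orderEmbOfFin _ hw) := isCondensation_staircase (by simp) (by simp)
  let eStair := Equiv.subtypeEquivRight fun G => isStair_and_type_iff (τ := τ) (G := G)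
  let eShape := Equiv.subtypeEquivRight fun F => (isCCT_shape_iff hk hw (F := F)).symm
  refine ⟨eStair.trans (h.fillingEquiv.trans eShape), fun T => ?_⟩
  have hcount (b : Bool) := h.entryCount_fillingEquiv (eStair T) b
  have hκα := (entryCount_diagonalEntries τ true).trans hk
  have hκβ := (entryCount_diagonalEntries τ false).trans hfalse
  exact congrArg₂ (fun a b => MvPolynomial.X 0 ^ a * MvPolynomial.X 1 ^ b)
    ((hcount true).trans (congrArg (· + _) hκα)) ((hcount false).trans (congrArg (· + _) hκβ))
end

section
/- (Corteel–Williams, stationarity form) Fix an integer n ≥ 1 and real numbers α > 0, β > 0. For a word τ ∈ {0,1}^n (1 = particle, 0 = hole) with k ones, let P(τ) be the sum, over all Condensed Catalan tableaux T of size (k,n) and shape λ(τ) (where λ(τ)_j is the number of 0's strictly to the right of the j-th 1 in τ), of α^{k+j(T)} β^{n−k+ℓ(T)}, where j(T) and ℓ(T) are the numbers of α's and β's in the filling of T. Then P is a stationary measure for the TASEP: for every state σ ∈ {0,1}^n, Σ_{τ ∈ {0,1}^n, τ ≠ σ} r(τ, σ) P(τ) = P(σ) · Σ_{τ' ∈ {0,1}^n,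 τ' ≠ σ} r(σ, τ'), where the transition rate r is defined by: r(τ, τ') = α if τ_1 = 0 and τ' is obtained from τ by setting site 1 to 1; r(τ, τ') = β if τ_n = 1 and τ' is obtained from τ by setting site n to 0; r(τ, τ') = 1 if for some 1 ≤ i ≤ n−1, (τ_i, τ_{i+1}) = (1,0) and τ' is obtained from τ by swapping sites i and i+1; and r(τ, τ') = 0 otherwise. -/
open scoped Classical
open Finset

/-- The transition rate of the open-boundary TASEP on `n` sites from state `σ` to
state `τ` (`true` = particle, `false` = hole): rate `a = α` for a particle entering at
site `1` (when empty), rate `b = β` for the particle at site `n` exiting, rate `1` for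
a particle hopping right to an empty neighbouring site, and `0` otherwise (the three
cases are mutually exclusive). -/
noncomputable def tasepRate (n : ℕ) (a b : ℝ) (σ τ : Fin n → Bool) : ℝ :=
  (if ∃ h : 0 < n, σ ⟨0, h⟩ = false ∧ τ = Function.update σ ⟨0, h⟩ true then a else 0) +
  (if ∃ h : 0 < n, σ ⟨n - 1, Nat.sub_lt h Nat.one_pos⟩ = true ∧
      τ = Function.update σ ⟨n - 1, Nat.sub_lt h Nat.one_pos⟩ false then b else 0) +
  (if ∃ i : Fin n, ∃ h : (i : ℕ) + 1 < n, σ i = true ∧ σ ⟨(i : ℕ) + 1, h⟩ = false ∧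
      τ = Function.update (Function.update σ i false) ⟨(i : ℕ) + 1, h⟩ true then 1 else 0)

/-- `P(τ)`: the sum over all Condensed Catalan tableaux of size `(k,n)` and shape
`λ(τ)` (where `k` is the number of particles of `τ` and `λ(τ) j` is the number of
holes strictly to the right of the `j`-th particle) of `a^(k+j) b^(n-k+ℓ)`, where
`j, ℓ` are the numbers of α's and β's in the filling. -/
noncomputable def statWeight (n : ℕ) (a b : ℝ) (τ : Fin n → Bool) : ℝ :=
  ∑ F ∈ Finset.univ.filter
      (IsCCT ((Finset.univ.filter fun p => τ p = true).card)
        (n - (Finset.univ.filter fun p => τ p = true).card)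
        (fun j => (Finset.univ.filter fun p : Fin n =>
          τ p = false ∧
            (((Finset.univ.filter fun q => τ q = true).orderIsoOfFin rfl j : Fin n)
              < p)).card)),
    a ^ ((Finset.univ.filter fun p => τ p = true).card +
          aCount ((Finset.univ.filter fun p => τ p = true).card)
            (n - (Finset.univ.filter fun p => τ p = true).card) F) *
      b ^ ((n - (Finset.univ.filter fun p => τ p = true).card) +
          bCount ((Finset.univ.filter fun p => τ p = true).card)
            (n - (Finset.univ.filter fun p => τ p = true).card) F)

/-!
Index the rows of the diagram of a word by its particles and the columns by its holes, so that a
tableau is an array drawn on the word itself. Deleting the empty row and column of an initial hole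
or of a final particle, and, for a particle followed by a hole, the column (row) of their box when
that box contains `α` (`β`), shows that the weights satisfy the recursion behind the matrix ansatz
of Derrida, Evans, Hakim and Pasquier. By this recursion the net flow of probability through each
bond of the lattice is a difference of values of one potential at the two ends of the bond, and the
net flows through the two boundaries are, up to sign, its values at the end sites. The total net
flow into a state therefore telescopes to `0`, which is global balance.
-/

section NetFlow

variable {α R : Type*} [Fintype α] [CommRing R]

/-- The net probability flow into the state `σ` of the Markov chain with transition rates `r`, when
the states carry the weights `f`. The loops `r σ σ` cancel, so the sum may run over all states. -/
def netFlow (r : α → α → R) (f : α → R) (σ : α) : R :=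
  ∑ τ, (r τ σ * f τ - f σ * r σ τ)

lemma netFlow_eq_zero_iff [DecidableEq α] (r : α → α → R) (f : α → R) (σ : α) :
    netFlow r f σ = 0 ↔
      ∑ τ with τ ≠ σ, r τ σ * f τ = f σ * ∑ τ with τ ≠ σ, r σ τ := by
  have loop_cancels : r σ σ * f σ - f σ * r σ σ = 0 := by ring
  rw [netFlow, ← sum_filter_of_ne (p := (· ≠ σ)), sum_sub_distrib, ← mul_sum, sub_eq_zero]
  rintro τ - hτ rfl
  exact hτ loop_cancels

lemma netFlow_add (r₁ r₂ : α → α → R) (f : α → R) (σ : α) :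
    netFlow (r₁ + r₂) f σ = netFlow r₁ f σ + netFlow r₂ f σ := by
  simp only [netFlow, ← sum_add_distrib, Pi.add_apply]
  exact sum_congr rfl fun τ _ ↦ by ring

lemma netFlow_sum {ι : Type*} (s : Finset ι) (r : ι → α → α → R) (f : α → R) (σ : α) :
    netFlow (∑ i ∈ s, r i) f σ = ∑ i ∈ s, netFlow (r i) f σ := by
  simp only [netFlow, Finset.sum_apply, sum_mul, mul_sum, ← sum_sub_distrib]
  exact sum_comm

/-- The transition rates of the chain whose only move sends a state `σ` satisfying `C` to `s σ`,
at rate `w`. -/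
noncomputable def moveRate (C : α → Prop) (s : α → α) (w : R) (σ τ : α) : R :=
  if C σ ∧ τ = s σ then w else 0

lemma netFlow_moveRate (C : α → Prop) {s : α → α} (hs : Function.Involutive s) (w : R)
    (f : α → R) (σ : α) :
    netFlow (moveRate C s w) f σ =
      (if C (s σ) then w * f (s σ) else 0) - (if C σ then w * f σ else 0) := by
  have source (τ : α) : C τ ∧ σ = s τ ↔ C (s σ) ∧ τ = s σ := by
    rw [← hs.eq_iff, eq_comm (b := τ)]
    exact and_congr_left fun h ↦ by rw [h]
  simp [netFlow, moveRate, source, ite_and, mul_comm (f σ)]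

end NetFlow

section TASEP

variable {R : Type*} [CommRing R] {n : ℕ}

/-- Flip the occupation of site `i`. -/
def toggle (i : Fin n) (σ : Fin n → Bool) : Fin n → Bool :=
  Function.update σ i (!σ i)

/-- Exchange the occupations of sites `i` and `i + 1`. -/
def exchange (i : Fin n) (σ : Fin (n + 1) → Bool) : Fin (n + 1) → Bool :=
  σ ∘ Equiv.swap i.castSucc i.succ

/-- The transition rates of the open-boundary TASEP on `n + 1` sites, with entrance rate `a` and
exit rate `b` in an arbitrary commutative ring, as a sum over the elementary moves. -/
noncomputable def openRate (a b : R) : (Fin (n + 1) → Bool) → (Fin (n + 1) → Bool) → R :=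
  moveRate (fun σ ↦ σ 0 = false) (toggle 0) a +
    moveRate (fun σ ↦ σ (Fin.last n) = true) (toggle (Fin.last n)) b +
    ∑ i : Fin n, moveRate (fun σ ↦ σ i.castSucc = true ∧ σ i.succ = false) (exchange i) 1

lemma toggle_apply_self (i : Fin n) (σ : Fin n → Bool) : toggle i σ i = !σ i := by
  simp [toggle]

lemma toggle_involutive (i : Fin n) : Function.Involutive (toggle i) := fun σ ↦ by
  simp [toggle]

lemma removeNth_toggle (i : Fin (n + 1)) (σ : Fin (n + 1) → Bool) :
    i.removeNth (toggle i σ) = i.removeNth σ :=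
  Fin.removeNth_update ..

lemma exchange_apply_castSucc (i : Fin n) (σ : Fin (n + 1) → Bool) :
    exchange i σ i.castSucc = σ i.succ := by
  simp [exchange]

lemma exchange_apply_succ (i : Fin n) (σ : Fin (n + 1) → Bool) :
    exchange i σ i.succ = σ i.castSucc := by
  simp [exchange]

lemma exchange_involutive (i : Fin n) : Function.Involutive (exchange i) := fun σ ↦ by
  simp [exchange, Function.comp_assoc, ← Equiv.coe_trans]

lemma swap_castSucc_succ_succAbove (i p : Fin n) :
    Equiv.swap i.castSucc i.succ (i.castSucc.succAbove p) = i.succ.succAbove p := by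
  rcases eq_or_ne p i with rfl | hp
  · simp
  · rw [Equiv.swap_apply_of_ne_of_ne (Fin.succAbove_ne _ _)]
    · rcases hp.lt_or_gt with h | h
      · rw [Fin.succAbove_castSucc_of_lt _ _ h, Fin.succAbove_succ_of_le _ _ h.le]
      · rw [Fin.succAbove_castSucc_of_le _ _ h.le, Fin.succAbove_succ_of_lt _ _ h]
    · rw [← Fin.succAbove_castSucc_self i]
      exact Fin.succAbove_right_injective.ne hp

lemma removeNth_castSucc_exchange (i : Fin n) (σ : Fin (n + 1) → Bool) :
    i.castSucc.removeNth (exchange i σ) = i.succ.removeNth σ :=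
  funext fun p ↦ congrArg σ (swap_castSucc_succ_succAbove i p)

lemma removeNth_succ_exchange (i : Fin n) (σ : Fin (n + 1) → Bool) :
    i.succ.removeNth (exchange i σ) = i.castSucc.removeNth σ := by
  rw [← removeNth_castSucc_exchange, exchange_involutive]

lemma exchange_eq_self {i : Fin n} {σ : Fin (n + 1) → Bool} (h : σ i.castSucc = σ i.succ) :
    exchange i σ = σ := by
  rw [exchange, Equiv.comp_swap_eq_update, h, Function.update_eq_self, ← h,
    Function.update_eq_self]

/-- The recursion of Derrida, Evans, Hakim and Pasquier, relating the weights `W` of the words of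
length `n + 1` to the weights `V` of the words of length `n`. -/
structure DEHPRecursion (a b : R) (W : (Fin (n + 1) → Bool) → R) (V : (Fin n → Bool) → R) :
    Prop where
  first_hole {σ} : σ 0 = false → W σ = b * V (Fin.removeNth 0 σ)
  last_particle {σ} : σ (Fin.last n) = true → W σ = a * V (Fin.removeNth (Fin.last n) σ)
  particle_hole {σ} (i : Fin n) : σ i.castSucc = true → σ i.succ = false →
    W σ = a * b * (V (i.castSucc.removeNth σ) + V (i.succ.removeNth σ))

/-- The potential whose differences are the net flows through the bonds: the weight of the word
without its `i`-th letter, with a sign telling a particle from a hole. -/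
def bondPotential (a b : R) (V : (Fin n → Bool) → R) (σ : Fin (n + 1) → Bool) (i : Fin (n + 1)) :
    R :=
  (if σ i then 1 else -1) * (a * b * V (i.removeNth σ))

namespace DEHPRecursion

variable {a b : R} {W : (Fin (n + 1) → Bool) → R} {V : (Fin n → Bool) → R}

lemma netFlow_enter (h : DEHPRecursion a b W V) (σ : Fin (n + 1) → Bool) :
    netFlow (moveRate (fun σ ↦ σ 0 = false) (toggle 0) a) W σ = bondPotential a b V σ 0 := by
  rw [netFlow_moveRate _ (toggle_involutive 0), bondPotential, toggle_apply_self]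
  rcases hσ : σ 0
  · rw [h.first_hole hσ]
    simp only [Bool.not_false, Bool.true_eq_false, Bool.false_eq_true, ↓reduceIte]
    ring
  · rw [h.first_hole (σ := toggle 0 σ) (by simp [toggle_apply_self, hσ]), removeNth_toggle]
    simp only [Bool.not_true, Bool.true_eq_false, ↓reduceIte]
    ring

lemma netFlow_exit (h : DEHPRecursion a b W V) (σ : Fin (n + 1) → Bool) :
    netFlow (moveRate (fun σ ↦ σ (Fin.last n) = true) (toggle (Fin.last n)) b) W σ =
      -bondPotential a b V σ (Fin.last n) := by
  rw [netFlow_moveRate _ (toggle_involutive _), bondPotential, toggle_apply_self]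
  rcases hσ : σ (Fin.last n)
  · rw [h.last_particle (σ := toggle (Fin.last n) σ) (by simp [toggle_apply_self, hσ]),
      removeNth_toggle]
    simp only [Bool.not_false, Bool.false_eq_true, ↓reduceIte]
    ring
  · rw [h.last_particle hσ]
    simp only [Bool.not_true, Bool.false_eq_true, ↓reduceIte]
    ring

lemma netFlow_hop (h : DEHPRecursion a b W V) (σ : Fin (n + 1) → Bool) (i : Fin n) :
    netFlow (moveRate (fun σ ↦ σ i.castSucc = true ∧ σ i.succ = false) (exchange i) 1) W σ =
      bondPotential a b V σ i.succ - bondPotential a b V σ i.castSucc := by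
  rw [netFlow_moveRate _ (exchange_involutive i), bondPotential, bondPotential,
    exchange_apply_castSucc, exchange_apply_succ]
  have removals_eq (hσ : σ i.castSucc = σ i.succ) :
      i.succ.removeNth σ = i.castSucc.removeNth σ := by
    rw [← removeNth_castSucc_exchange, exchange_eq_self hσ]
  rcases hi : σ i.castSucc <;> rcases hj : σ i.succ
  · simp [removals_eq (hi.trans hj.symm)]
  · rw [h.particle_hole (σ := exchange i σ) i (by rwa [exchange_apply_castSucc])
      (by rwa [exchange_apply_succ]), removeNth_castSucc_exchange, removeNth_succ_exchange]
    simp only [and_self, ↓reduceIte, one_mul, Bool.false_eq_true, Bool.true_eq_false]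
    ring
  · rw [h.particle_hole i hi hj]
    simp only [and_self, ↓reduceIte, one_mul, Bool.false_eq_true, Bool.true_eq_false]
    ring
  · simp [removals_eq (hi.trans hj.symm)]

lemma netFlow_openRate (h : DEHPRecursion a b W V) (σ : Fin (n + 1) → Bool) :
    netFlow (openRate a b) W σ = 0 := by
  have telescope : ∑ i : Fin n, (bondPotential a b V σ i.succ - bondPotential a b V σ i.castSucc) =
      bondPotential a b V σ (Fin.last n) - bondPotential a b V σ 0 := by
    rw [sum_sub_distrib, sub_eq_sub_iff_add_eq_add, add_comm, ← Fin.sum_univ_succ,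
      Fin.sum_univ_castSucc, add_comm]
  rw [openRate, netFlow_add, netFlow_add, netFlow_sum, h.netFlow_enter, h.netFlow_exit,
    sum_congr rfl fun i _ ↦ h.netFlow_hop σ i, telescope]
  ring

end DEHPRecursion

lemma eq_of_exchange_eq_exchange {σ : Fin (n + 1) → Bool} {i j : Fin n}
    (hi : σ i.castSucc = true ∧ σ i.succ = false) (hj : σ j.castSucc = true ∧ σ j.succ = false)
    (h : exchange i σ = exchange j σ) : i = j := by
  by_contra hij
  have fixed : exchange j σ i.castSucc = σ i.castSucc := by
    refine congrArg σ (Equiv.swap_apply_of_ne_of_ne (by simpa using hij) fun hs ↦ ?_)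
    simp [hs, hj.2] at hi
  rw [← h, exchange_apply_castSucc, hi.1, hi.2] at fixed
  exact Bool.false_ne_true fixed

lemma exchange_eq_update {σ : Fin (n + 1) → Bool} {i : Fin n}
    (hi : σ i.castSucc = true ∧ σ i.succ = false) :
    exchange i σ = Function.update (Function.update σ i.castSucc false) i.succ true := by
  rw [exchange, Equiv.swap_comm, Equiv.comp_swap_eq_update, hi.1, hi.2]

lemma tasepRate_eq_openRate (a b : ℝ) : tasepRate (n + 1) a b = openRate a b := by
  funext σ τ
  have hop_unique (i j : Fin n)
      (hi : (σ i.castSucc = true ∧ σ i.succ = false) ∧ τ = exchange i σ)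
      (hj : (σ j.castSucc = true ∧ σ j.succ = false) ∧ τ = exchange j σ) : i = j :=
    eq_of_exchange_eq_exchange hi.1 hj.1 (hi.2.symm.trans hj.2)
  have flip_iff (i : Fin (n + 1)) (x : Bool) :
      (σ i = x ∧ τ = Function.update σ i (!x)) ↔ σ i = x ∧ τ = toggle i σ :=
    and_congr_right fun h ↦ by rw [toggle, h]
  have hop_iff : (∃ i : Fin (n + 1), ∃ h : (i : ℕ) + 1 < n + 1, σ i = true ∧
        σ ⟨(i : ℕ) + 1, h⟩ = false ∧
        τ = Function.update (Function.update σ i false) ⟨(i : ℕ) + 1, h⟩ true) ↔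
      ∃ i : Fin n, (σ i.castSucc = true ∧ σ i.succ = false) ∧ τ = exchange i σ := by
    constructor
    · rintro ⟨i, h, hi, hj, hτ⟩
      exact ⟨⟨i, by omega⟩, ⟨hi, hj⟩,
        hτ.trans (exchange_eq_update (i := ⟨i, by omega⟩) ⟨hi, hj⟩).symm⟩
    · rintro ⟨i, hi, hτ⟩
      exact ⟨i.castSucc, i.succ.isLt, hi.1, hi.2, hτ.trans (exchange_eq_update hi)⟩
  simp only [tasepRate, openRate, Pi.add_apply, Finset.sum_apply, moveRate, hop_iff, ← flip_iff,
    exists_prop_of_true n.succ_pos]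
  refine congrArg₂ (· + ·) rfl (Eq.symm ?_)
  convert Fintype.sum_ite_eq_ite_exists _ hop_unique (1 : ℝ)

end TASEP

section WordTableau

variable {R : Type*} [CommRing R] {n : ℕ}

/-- A Condensed Catalan tableau drawn on the word `τ`: its rows are labelled by the positions of the
particles, its columns by the positions of the holes, and `G p q` is the content of the box in row
`p` and column `q`, which exists when `p < q`; all other entries of `G` are `none`. Positions of
particles increase to the south and positions of holes increase to the west. -/
structure IsWordTableau (τ : Fin n → Bool) (G : Fin n → Fin n → Option Bool) : Prop where
  eq_none_of_not_box : ∀ p q, ¬(τ p = true ∧ τ q = false ∧ p < q) → G p q = none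
  eq_none_of_beta : ∀ p q q', G p q = some false → q < q' → G p q' = none
  eq_none_of_alpha : ∀ p p' q, G p q = some true → p' < p → G p' q = none
  ne_none : ∀ p q, τ p = true → τ q = false → p < q → (∀ p', p < p' → G p' q ≠ some true) →
    (∀ q', q' < q → G p q' ≠ some false) → G p q ≠ none

/-- The weight of the content of a box. -/
def cellWeight (a b : R) : Option Bool → R
  | none => 1
  | some true => a
  | some false => b

/-- The weight of the filling `G` of the diagram of the word `τ`: a factor `a` for each particle and
each `α`, and a factor `b` for each hole and each `β`. -/
def fillingWeight (a b : R) (τ : Fin n → Bool) (G : Fin n → Fin n → Option Bool) : R :=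
  (∏ p, if τ p then a else b) * ∏ p, ∏ q, cellWeight a b (G p q)

/-- The generating function of the tableaux drawn on `τ`, the counterpart of `statWeight` over an
arbitrary commutative ring. -/
noncomputable def tableauWeight (a b : R) (τ : Fin n → Bool) : R :=
  ∑ G with IsWordTableau τ G, fillingWeight a b τ G

/-- The square array obtained from `G` by deleting row `j` and column `j`. -/
def deleteCross {X : Type*} (j : Fin (n + 1)) (G : Fin (n + 1) → Fin (n + 1) → X) :
    Fin n → Fin n → X :=
  fun p q ↦ G (j.succAbove p) (j.succAbove q)

/-- The square array obtained from `G` by inserting the row `r` and the column `c` at `j`; the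
entry where they cross is given by `r`. -/
def insertCross {X : Type*} (j : Fin (n + 1)) (r : Fin (n + 1) → X) (c : Fin n → X)
    (G : Fin n → Fin n → X) : Fin (n + 1) → Fin (n + 1) → X :=
  j.insertNth r fun p ↦ j.insertNth (c p) (G p)

section Cross

variable {X : Type*} (j : Fin (n + 1)) (r : Fin (n + 1) → X) (c : Fin n → X)
  (G : Fin n → Fin n → X)

lemma insertCross_row : insertCross j r c G j = r := by
  simp [insertCross]

lemma insertCross_col (p : Fin n) : insertCross j r c G (j.succAbove p) j = c p := by
  simp [insertCross]

lemma deleteCross_insertCross : deleteCross j (insertCross j r c G) = G := by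
  funext p q
  simp [deleteCross, insertCross]

lemma insertCross_deleteCross (G : Fin (n + 1) → Fin (n + 1) → X) :
    insertCross j (G j) (fun p ↦ G (j.succAbove p) j) (deleteCross j G) = G := by
  have rows (p : Fin n) : j.insertNth (G (j.succAbove p) j) (deleteCross j G p) =
      G (j.succAbove p) := j.insertNth_self_removeNth (G (j.succAbove p))
  simp only [insertCross, rows]
  exact j.insertNth_self_removeNth G

end Cross

lemma fillingWeight_eq_deleteCross (a b : R) (τ : Fin (n + 1) → Bool) (j : Fin (n + 1))
    (G : Fin (n + 1) → Fin (n + 1) → Option Bool) :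
    fillingWeight a b τ G = (if τ j then a else b) *
      ((∏ q, cellWeight a b (G j q)) * ∏ p, cellWeight a b (G (j.succAbove p) j)) *
        fillingWeight a b (j.removeNth τ) (deleteCross j G) := by
  have rows (p : Fin n) : ∏ q, cellWeight a b (G (j.succAbove p) q) =
      cellWeight a b (G (j.succAbove p) j) * ∏ q, cellWeight a b (deleteCross j G p q) :=
    Fin.prod_univ_succAbove _ j
  have letters : ∏ p, (if τ p then a else b) =
      (if τ j then a else b) * ∏ p, if j.removeNth τ p then a else b :=
    Fin.prod_univ_succAbove _ j
  rw [fillingWeight, fillingWeight, letters, Fin.prod_univ_succAbove (fun p ↦ ∏ q, _) j,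
    prod_congr rfl fun p _ ↦ rows p, prod_mul_distrib]
  ring

lemma sum_fillingWeight_of_iff (a b : R) (τ : Fin (n + 1) → Bool) (j : Fin (n + 1))
    (r : Fin (n + 1) → Option Bool) (c : Fin n → Option Bool)
    {P : (Fin (n + 1) → Fin (n + 1) → Option Bool) → Prop} [DecidablePred P]
    (hP : ∀ G, P G ↔ IsWordTableau (j.removeNth τ) (deleteCross j G) ∧
      (∀ q, G j q = r q) ∧ ∀ p, G (j.succAbove p) j = c p) :
    ∑ G with P G, fillingWeight a b τ G = (if τ j then a else b) *
      ((∏ q, cellWeight a b (r q)) * ∏ p, cellWeight a b (c p)) *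
        tableauWeight a b (j.removeNth τ) := by
  rw [tableauWeight, mul_sum]
  refine sum_nbij' (deleteCross j) (insertCross j r c) ?_ ?_ ?_ ?_ ?_
  · simp only [mem_filter_univ, hP]
    exact fun G hG ↦ hG.1
  · simp only [mem_filter_univ, hP, deleteCross_insertCross, insertCross_row, insertCross_col]
    simp
  · simp only [mem_filter_univ, hP]
    rintro G ⟨-, hr, hc⟩
    rw [← funext hr, ← funext hc, insertCross_deleteCross]
  · exact fun G _ ↦ deleteCross_insertCross j r c G
  · simp only [mem_filter_univ, hP]
    rintro G ⟨-, hr, hc⟩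
    simp only [fillingWeight_eq_deleteCross a b τ j, hr, hc]

lemma IsWordTableau.box_of_eq_some {τ : Fin n → Bool} {G : Fin n → Fin n → Option Bool}
    (h : IsWordTableau τ G) {p q : Fin n} {x : Bool} (hx : G p q = some x) :
    τ p = true ∧ τ q = false ∧ p < q :=
  by_contra fun hbox ↦ Option.some_ne_none x (hx.symm.trans (h.eq_none_of_not_box p q hbox))

lemma IsWordTableau.deleteCross {τ : Fin (n + 1) → Bool} {j : Fin (n + 1)}
    {G : Fin (n + 1) → Fin (n + 1) → Option Bool} (h : IsWordTableau τ G)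
    (hrow : ∀ q, G j (j.succAbove q) ≠ some true)
    (hcol : ∀ p, G (j.succAbove p) j ≠ some false) :
    IsWordTableau (j.removeNth τ) (deleteCross j G) where
  eq_none_of_not_box p q hpq := h.eq_none_of_not_box _ _ <| by
    rwa [(Fin.strictMono_succAbove j).lt_iff_lt]
  eq_none_of_beta p q q' hq hlt := h.eq_none_of_beta _ _ _ hq (Fin.strictMono_succAbove j hlt)
  eq_none_of_alpha p p' q hp hlt := h.eq_none_of_alpha _ _ _ hp (Fin.strictMono_succAbove j hlt)
  ne_none p q hp hq hpq hα hβ := by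
    refine h.ne_none _ _ hp hq (Fin.strictMono_succAbove j hpq) (fun p' hp' ↦ ?_) fun q' hq' ↦ ?_
    · rcases Fin.eq_self_or_eq_succAbove j p' with rfl | ⟨p', rfl⟩
      · exact hrow q
      · exact hα p' ((Fin.strictMono_succAbove j).lt_iff_lt.1 hp')
    · rcases Fin.eq_self_or_eq_succAbove j q' with rfl | ⟨q', rfl⟩
      · exact hcol p
      · exact hβ q' ((Fin.strictMono_succAbove j).lt_iff_lt.1 hq')

lemma isWordTableau_iff_of_first_hole {τ : Fin (n + 1) → Bool} (h : τ 0 = false)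
    (G : Fin (n + 1) → Fin (n + 1) → Option Bool) :
    IsWordTableau τ G ↔ IsWordTableau (Fin.removeNth 0 τ) (deleteCross 0 G) ∧
      (∀ q, G 0 q = none) ∧ ∀ p, G (Fin.succAbove 0 p) 0 = none := by
  constructor
  · intro hG
    have row (q) : G 0 q = none := hG.eq_none_of_not_box _ _ (by simp [h])
    have col (p) : G (Fin.succAbove 0 p) 0 = none := hG.eq_none_of_not_box _ _ (by simp)
    exact ⟨hG.deleteCross (by simp [row]) (fun p ↦ by simp only [col]; exact nofun), row, col⟩
  · rintro ⟨⟨not_box, beta, alpha, filled⟩, row, col⟩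
    simp only [deleteCross, Fin.removeNth_apply] at not_box beta alpha filled
    constructor <;>
      simp only [Fin.forall_iff_succAbove (0 : Fin (n + 1)), Fin.succAbove_lt_succAbove_iff] <;>
      grind

lemma isWordTableau_iff_of_last_particle {τ : Fin (n + 1) → Bool} (h : τ (Fin.last n) = true)
    (G : Fin (n + 1) → Fin (n + 1) → Option Bool) :
    IsWordTableau τ G ↔
      IsWordTableau (Fin.removeNth (Fin.last n) τ) (deleteCross (Fin.last n) G) ∧
        (∀ q, G (Fin.last n) q = none) ∧ ∀ p, G ((Fin.last n).succAbove p) (Fin.last n) = none := by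
  have last_not_lt (q : Fin (n + 1)) : ¬Fin.last n < q := (Fin.le_last q).not_gt
  constructor
  · intro hG
    have row (q) : G (Fin.last n) q = none :=
      hG.eq_none_of_not_box _ _ fun hq ↦ last_not_lt q hq.2.2
    have col (p) : G ((Fin.last n).succAbove p) (Fin.last n) = none :=
      hG.eq_none_of_not_box _ _ (by simp [h])
    exact ⟨hG.deleteCross (by simp [row]) (fun p ↦ by simp only [col]; exact nofun), row, col⟩
  · rintro ⟨⟨not_box, beta, alpha, filled⟩, row, col⟩
    simp only [deleteCross, Fin.removeNth_apply] at not_box beta alpha filled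
    constructor <;>
      simp only [Fin.forall_iff_succAbove (Fin.last n), Fin.succAbove_lt_succAbove_iff] <;>
      grind

lemma succ_succAbove_lt_succ_iff {i p : Fin n} : i.succ.succAbove p < i.succ ↔ p ≤ i := by
  rw [Fin.succAbove_lt_iff_castSucc_lt, Fin.castSucc_lt_succ_iff]

lemma succ_lt_succ_succAbove_iff {i p : Fin n} : i.succ < i.succ.succAbove p ↔ i < p := by
  rw [Fin.lt_succAbove_iff_lt_castSucc, ← Fin.succ_lt_succ_iff (a := i)]

lemma castSucc_succAbove_lt_castSucc_iff {i p : Fin n} :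
    i.castSucc.succAbove p < i.castSucc ↔ p < i := by
  rw [Fin.succAbove_lt_iff_castSucc_lt, Fin.castSucc_lt_castSucc_iff]

lemma castSucc_lt_castSucc_succAbove_iff {i p : Fin n} :
    i.castSucc < i.castSucc.succAbove p ↔ i ≤ p := by
  rw [Fin.lt_succAbove_iff_le_castSucc, Fin.castSucc_le_castSucc_iff]

lemma isWordTableau_and_alpha_iff {τ : Fin (n + 1) → Bool} {i : Fin n}
    (hi : τ i.castSucc = true) (hj : τ i.succ = false)
    (G : Fin (n + 1) → Fin (n + 1) → Option Bool) :
    IsWordTableau τ G ∧ G i.castSucc i.succ = some true ↔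
      IsWordTableau (i.succ.removeNth τ) (deleteCross i.succ G) ∧ (∀ q, G i.succ q = none) ∧
        ∀ p, G (i.succ.succAbove p) i.succ = if p = i then some true else none := by
  rw [← Fin.succAbove_succ_self] at hi ⊢
  constructor
  · rintro ⟨hG, corner⟩
    have row (q) : G i.succ q = none := hG.eq_none_of_not_box _ _ (by simp [hj])
    have col (p) : G (i.succ.succAbove p) i.succ = if p = i then some true else none := by
      rcases lt_trichotomy p i with hp | rfl | hp
      · rw [if_neg hp.ne]
        exact hG.eq_none_of_alpha _ _ _ corner (Fin.strictMono_succAbove _ hp)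
      · rw [if_pos rfl, corner]
      · rw [if_neg hp.ne']
        exact hG.eq_none_of_not_box _ _ fun hbox ↦
          hbox.2.2.not_gt (succ_lt_succ_succAbove_iff.2 hp)
    exact ⟨hG.deleteCross (by simp [row]) (by simp [col]), row, col⟩
  · rintro ⟨⟨not_box, beta, alpha, filled⟩, row, col⟩
    simp only [deleteCross, Fin.removeNth_apply] at not_box beta alpha filled
    refine ⟨?_, (col i).trans (if_pos rfl)⟩
    -- The inserted column has no `β`, so it excuses no other box from being filled, and its own
    -- boxes are the one with the `α` and those north of it.
    constructor <;>
      simp only [Fin.forall_iff_succAbove i.succ, Fin.succAbove_lt_succAbove_iff,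
        succ_succAbove_lt_succ_iff, succ_lt_succ_succAbove_iff] <;>
      grind

lemma isWordTableau_and_beta_iff {τ : Fin (n + 1) → Bool} {i : Fin n}
    (hi : τ i.castSucc = true) (hj : τ i.succ = false)
    (G : Fin (n + 1) → Fin (n + 1) → Option Bool) :
    IsWordTableau τ G ∧ G i.castSucc i.succ = some false ↔
      IsWordTableau (i.castSucc.removeNth τ) (deleteCross i.castSucc G) ∧
        (∀ q, G i.castSucc q = if q = i.succ then some false else none) ∧
          ∀ p, G (i.castSucc.succAbove p) i.castSucc = none := by
  constructor
  · rintro ⟨hG, corner⟩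
    have row (q) : G i.castSucc q = if q = i.succ then some false else none := by
      rcases lt_trichotomy q i.succ with hq | rfl | hq
      · rw [if_neg hq.ne]
        exact hG.eq_none_of_not_box _ _ fun hbox ↦
          hbox.2.2.not_ge (Fin.le_castSucc_iff.2 hq)
      · rw [if_pos rfl, corner]
      · rw [if_neg hq.ne']
        exact hG.eq_none_of_beta _ _ _ corner hq
    have col (p) : G (i.castSucc.succAbove p) i.castSucc = none :=
      hG.eq_none_of_not_box _ _ (by simp [hi])
    exact ⟨hG.deleteCross (fun q ↦ by rw [row]; split_ifs <;> simp) (by simp [col]), row, col⟩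
  · rintro ⟨⟨not_box, beta, alpha, filled⟩, row, col⟩
    simp only [deleteCross, Fin.removeNth_apply] at not_box beta alpha filled
    refine ⟨?_, by simp [row]⟩
    -- The inserted row has no `α`, so it excuses no other box from being filled, and its own boxes
    -- are the one with the `β` and those west of it.
    simp only [← Fin.succAbove_castSucc_self, Fin.forall_iff_succAbove i.castSucc,
      Fin.ne_succAbove, Fin.succAbove_right_inj, if_false] at hj row
    constructor <;>
      simp only [Fin.forall_iff_succAbove i.castSucc, Fin.succAbove_lt_succAbove_iff,
        castSucc_succAbove_lt_castSucc_iff, castSucc_lt_castSucc_succAbove_iff] <;>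
      grind

lemma tableauWeight_of_first_hole (a b : R) {τ : Fin (n + 1) → Bool} (h : τ 0 = false) :
    tableauWeight a b τ = b * tableauWeight a b (Fin.removeNth 0 τ) :=
  (sum_fillingWeight_of_iff a b τ 0 _ _ (isWordTableau_iff_of_first_hole h)).trans <| by
    simp [cellWeight, h]

lemma tableauWeight_of_last_particle (a b : R) {τ : Fin (n + 1) → Bool}
    (h : τ (Fin.last n) = true) :
    tableauWeight a b τ = a * tableauWeight a b (Fin.removeNth (Fin.last n) τ) :=
  (sum_fillingWeight_of_iff a b τ _ _ _ (isWordTableau_iff_of_last_particle h)).trans <| by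
    simp [cellWeight, h]

lemma sum_fillingWeight_alpha (a b : R) {τ : Fin (n + 1) → Bool} {i : Fin n}
    (hi : τ i.castSucc = true) (hj : τ i.succ = false) :
    ∑ G with IsWordTableau τ G ∧ G i.castSucc i.succ = some true, fillingWeight a b τ G =
      a * b * tableauWeight a b (i.succ.removeNth τ) := by
  rw [sum_fillingWeight_of_iff a b τ _ _ _ (isWordTableau_and_alpha_iff hi hj)]
  simp only [hj, apply_ite (cellWeight a b)]
  simp [cellWeight, mul_comm]

lemma sum_fillingWeight_beta (a b : R) {τ : Fin (n + 1) → Bool} {i : Fin n}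
    (hi : τ i.castSucc = true) (hj : τ i.succ = false) :
    ∑ G with IsWordTableau τ G ∧ G i.castSucc i.succ = some false, fillingWeight a b τ G =
      a * b * tableauWeight a b (i.castSucc.removeNth τ) := by
  rw [sum_fillingWeight_of_iff a b τ _ _ _ (isWordTableau_and_beta_iff hi hj)]
  simp only [hi, apply_ite (cellWeight a b)]
  simp [cellWeight]

lemma IsWordTableau.corner_ne_none {τ : Fin (n + 1) → Bool}
    {G : Fin (n + 1) → Fin (n + 1) → Option Bool} (h : IsWordTableau τ G) {i : Fin n}
    (hi : τ i.castSucc = true) (hj : τ i.succ = false) : G i.castSucc i.succ ≠ none := by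
  refine h.ne_none _ _ hi hj i.castSucc_lt_succ (fun p hp ↦ ?_) fun q hq ↦ ?_
  · rw [h.eq_none_of_not_box p _ fun hbox ↦ hbox.2.2.not_ge (Fin.castSucc_lt_iff_succ_le.1 hp)]
    exact nofun
  · rw [h.eq_none_of_not_box _ q fun hbox ↦ hbox.2.2.not_ge (Fin.le_castSucc_iff.2 hq)]
    exact nofun

lemma tableauWeight_of_particle_hole (a b : R) {τ : Fin (n + 1) → Bool} (i : Fin n)
    (hi : τ i.castSucc = true) (hj : τ i.succ = false) :
    tableauWeight a b τ = a * b *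
      (tableauWeight a b (i.castSucc.removeNth τ) + tableauWeight a b (i.succ.removeNth τ)) := by
  have not_alpha_iff (G) (hG : IsWordTableau τ G) :
      ¬G i.castSucc i.succ = some true ↔ G i.castSucc i.succ = some false := by
    obtain ⟨x, hx⟩ := Option.ne_none_iff_exists'.1 (hG.corner_ne_none hi hj)
    simp [hx]
  have not_alpha_and_iff (G) : (IsWordTableau τ G ∧ ¬G i.castSucc i.succ = some true) ↔
      IsWordTableau τ G ∧ G i.castSucc i.succ = some false := and_congr_right (not_alpha_iff G)
  rw [mul_add, ← sum_fillingWeight_beta a b hi hj, ← sum_fillingWeight_alpha a b hi hj,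
    tableauWeight, ← sum_filter_not_add_sum_filter _ (fun G ↦ G i.castSucc i.succ = some true),
    filter_filter, filter_filter]
  simp only [not_alpha_and_iff]

lemma dehpRecursion_tableauWeight (a b : R) :
    DEHPRecursion a b (tableauWeight a b : (Fin (n + 1) → Bool) → R) (tableauWeight a b) where
  first_hole := tableauWeight_of_first_hole a b
  last_particle := tableauWeight_of_last_particle a b
  particle_hole := tableauWeight_of_particle_hole a b

end WordTableau

section Labelling

variable {n k w : ℕ} {τ : Fin n → Bool} {e : Fin k → Fin n} {f : Fin w → Fin n}

/-- The rows of the Young diagram of the word `τ` are labelled from north to south by the particles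
`e 0 < e 1 < ⋯`, and its columns from west to east by the holes `f 0 > f 1 > ⋯`. -/
structure IsLabelling (τ : Fin n → Bool) (e : Fin k → Fin n) (f : Fin w → Fin n) : Prop where
  strictMono : StrictMono e
  strictAnti : StrictAnti f
  particle_iff : ∀ p, τ p = true ↔ ∃ i, e i = p
  hole_iff : ∀ q, τ q = false ↔ ∃ c, f c = q

/-- The array indexed by the sites of the word that carries the content `F i c` at `(e i, f c)` and
is empty elsewhere. -/
noncomputable def spread (e : Fin k → Fin n) (f : Fin w → Fin n) (F : Fin k → Fin w → Option Bool) :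
    Fin n → Fin n → Option Bool :=
  fun p q ↦ Function.extend (Prod.map e f) (Function.uncurry F) (fun _ ↦ none) (p, q)

lemma val_lt_card_iff_of_isLowerSet {D : Finset (Fin w)} (hD : IsLowerSet (D : Set (Fin w)))
    {c : Fin w} : (c : ℕ) < #D ↔ c ∈ D := by
  refine ⟨fun h ↦ by_contra fun hc ↦ ?_, fun hc ↦ ?_⟩
  · have subset_Iio : D ⊆ Iio c := fun d hd ↦ mem_Iio.2 <| not_le.1 fun hcd ↦ hc (hD hcd hd)
    exact h.not_ge ((card_le_card subset_Iio).trans_eq (Fin.card_Iio c))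
  · have Iic_subset : Iic c ⊆ D := fun d hd ↦ hD (mem_Iic.1 hd) hc
    exact (Fin.card_Iic c).symm.trans_le (card_le_card Iic_subset)

lemma pow_aCount_mul_pow_bCount {R : Type*} [CommRing R] (a b : R)
    (F : Fin k → Fin w → Option Bool) :
    a ^ aCount k w F * b ^ bCount k w F = ∏ i, ∏ c, cellWeight a b (F i c) := by
  rw [aCount, bCount, ← prod_const, ← prod_const, prod_filter, prod_filter, ← prod_mul_distrib,
    Fintype.prod_prod_type]
  refine prod_congr rfl fun i _ ↦ prod_congr rfl fun c _ ↦ ?_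
  rcases F i c with _ | _ | _ <;> simp [cellWeight]

lemma card_holes (τ : Fin n → Bool) : #{p | τ p = false} = n - #{p | τ p = true} := by
  have total := card_filter_add_card_filter_not (s := (univ : Finset (Fin n))) (fun p ↦ τ p = true)
  simp only [card_univ, Fintype.card_fin, Bool.not_eq_true] at total
  omega

lemma prod_ite_particle {R : Type*} [CommRing R] (a b : R) (τ : Fin n → Bool) :
    ∏ p, (if τ p then a else b) = a ^ #{p | τ p = true} * b ^ (n - #{p | τ p = true}) := by
  rw [← card_holes, prod_ite, prod_const, prod_const]
  simp only [Bool.not_eq_true]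

lemma isLabelling_orderIsoOfFin (τ : Fin n → Bool) :
    IsLabelling τ (fun j ↦ (({p | τ p = true} : Finset (Fin n)).orderIsoOfFin rfl j : Fin n))
      (fun c ↦ (({p | τ p = false} : Finset (Fin n)).orderIsoOfFin (card_holes τ) c.rev : Fin n))
      where
  strictMono _ _ h := (orderIsoOfFin _ rfl).strictMono h
  strictAnti _ _ h := (orderIsoOfFin _ (card_holes τ)).strictMono (Fin.rev_lt_rev.2 h)
  particle_iff p := by
    rw [← mem_filter_univ (p := fun p ↦ τ p = true) p, ← mem_coe, ← range_orderEmbOfFin _ rfl]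
    rfl
  hole_iff q := by
    rw [← mem_filter_univ (p := fun p ↦ τ p = false) q, ← mem_coe,
      ← range_orderEmbOfFin _ (card_holes τ)]
    exact Fin.rev_surjective.exists

namespace IsLabelling

lemma val_lt_card_iff (h : IsLabelling τ e f) {i : Fin k} {c : Fin w} :
    (c : ℕ) < #{q | τ q = false ∧ e i < q} ↔ e i < f c := by
  have columns : ({q | τ q = false ∧ e i < q} : Finset (Fin n)) =
      ({c | e i < f c} : Finset (Fin w)).map ⟨f, h.strictAnti.injective⟩ := by
    ext q
    simp only [mem_filter_univ, mem_map, Function.Embedding.coeFn_mk, h.hole_iff]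
    exact ⟨fun ⟨⟨c, hc⟩, hq⟩ ↦ ⟨c, hc ▸ hq, hc⟩, fun ⟨c, hq, hc⟩ ↦ ⟨⟨c, hc⟩, hc ▸ hq⟩⟩
  rw [columns, card_map, val_lt_card_iff_of_isLowerSet, mem_filter_univ]
  exact fun c c' hc hlt ↦ by
    simp only [coe_filter_univ, Set.mem_ofPred_eq] at hlt ⊢
    exact hlt.trans_le (h.strictAnti.antitone hc)

lemma spread_apply (h : IsLabelling τ e f) (F : Fin k → Fin w → Option Bool) (i : Fin k)
    (c : Fin w) : spread e f F (e i) (f c) = F i c :=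
  (h.strictMono.injective.prodMap h.strictAnti.injective).extend_apply _ _ (i, c)

lemma spread_eq_none (h : IsLabelling τ e f) (F : Fin k → Fin w → Option Bool) {p q : Fin n}
    (hpq : ¬(τ p = true ∧ τ q = false)) : spread e f F p q = none := by
  refine Function.extend_apply' _ _ _ fun ⟨⟨i, c⟩, hic⟩ ↦ hpq ?_
  obtain ⟨rfl, rfl⟩ := Prod.ext_iff.1 hic
  exact ⟨(h.particle_iff _).2 ⟨i, rfl⟩, (h.hole_iff _).2 ⟨c, rfl⟩⟩

lemma spread_restrict (h : IsLabelling τ e f) {G : Fin n → Fin n → Option Bool}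
    (hG : ∀ p q, ¬(τ p = true ∧ τ q = false) → G p q = none) :
    spread e f (fun i c ↦ G (e i) (f c)) = G := by
  funext p q
  by_cases hpq : τ p = true ∧ τ q = false
  · obtain ⟨i, rfl⟩ := (h.particle_iff p).1 hpq.1
    obtain ⟨c, rfl⟩ := (h.hole_iff q).1 hpq.2
    exact h.spread_apply ..
  · rw [h.spread_eq_none _ hpq, hG p q hpq]

lemma exists_of_spread_eq_some (h : IsLabelling τ e f) {F : Fin k → Fin w → Option Bool}
    {p q : Fin n} {x : Bool} (hx : spread e f F p q = some x) :
    ∃ i c, e i = p ∧ f c = q ∧ F i c = some x := by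
  by_cases hpq : τ p = true ∧ τ q = false
  · obtain ⟨i, rfl⟩ := (h.particle_iff p).1 hpq.1
    obtain ⟨c, rfl⟩ := (h.hole_iff q).1 hpq.2
    exact ⟨i, c, rfl, rfl, by rwa [h.spread_apply] at hx⟩
  · rw [h.spread_eq_none F hpq] at hx
    cases hx

lemma isWordTableau_spread (h : IsLabelling τ e f) {F : Fin k → Fin w → Option Bool}
    (hF : IsCCT k w (fun i ↦ #{q | τ q = false ∧ e i < q}) F) :
    IsWordTableau τ (spread e f F) := by
  obtain ⟨none_of_not_box, none_of_beta, none_of_alpha, not_none⟩ := hF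
  refine ⟨fun p q hpq ↦ ?_, fun p q q' hβ hlt ↦ ?_, fun p p' q hα hlt ↦ ?_,
    fun p q hp hq hlt hα hβ ↦ ?_⟩
  · by_contra hne
    obtain ⟨x, hx⟩ := Option.ne_none_iff_exists'.1 hne
    obtain ⟨i, c, rfl, rfl, hic⟩ := h.exists_of_spread_eq_some hx
    rw [none_of_not_box i c (not_lt.1 fun hlt ↦ hpq ⟨(h.particle_iff _).2 ⟨i, rfl⟩,
      (h.hole_iff _).2 ⟨c, rfl⟩, h.val_lt_card_iff.1 hlt⟩)] at hic
    cases hic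
  · by_contra hne
    obtain ⟨i, c, rfl, rfl, hic⟩ := h.exists_of_spread_eq_some hβ
    obtain ⟨x, hx⟩ := Option.ne_none_iff_exists'.1 hne
    obtain ⟨i', c', hi, rfl, hic'⟩ := h.exists_of_spread_eq_some hx
    obtain rfl := h.strictMono.injective hi
    rw [none_of_beta _ c c' hic (h.strictAnti.lt_iff_gt.1 hlt)] at hic'
    cases hic'
  · by_contra hne
    obtain ⟨i, c, rfl, rfl, hic⟩ := h.exists_of_spread_eq_some hα
    obtain ⟨x, hx⟩ := Option.ne_none_iff_exists'.1 hne
    obtain ⟨i', c', rfl, hc, hic'⟩ := h.exists_of_spread_eq_some hx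
    obtain rfl := h.strictAnti.injective hc
    rw [none_of_alpha i i' _ hic (h.strictMono.lt_iff_lt.1 hlt)] at hic'
    cases hic'
  · obtain ⟨i, rfl⟩ := (h.particle_iff p).1 hp
    obtain ⟨c, rfl⟩ := (h.hole_iff q).1 hq
    rw [h.spread_apply]
    refine not_none i c (h.val_lt_card_iff.2 hlt) (fun i' hi' ↦ ?_) fun c' hc' _ ↦ ?_
    · simpa only [h.spread_apply] using hα (e i') (h.strictMono hi')
    · simpa only [h.spread_apply] using hβ (f c') (h.strictAnti hc')

lemma isCCT_of_isWordTableau (h : IsLabelling τ e f) {G : Fin n → Fin n → Option Bool}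
    (hG : IsWordTableau τ G) :
    IsCCT k w (fun i ↦ #{q | τ q = false ∧ e i < q}) fun i c ↦ G (e i) (f c) := by
  refine ⟨fun i c hle ↦ hG.eq_none_of_not_box _ _ fun hbox ↦
      hle.not_gt (h.val_lt_card_iff.2 hbox.2.2),
    fun i c c' hβ hlt ↦ hG.eq_none_of_beta _ _ _ hβ (h.strictAnti hlt),
    fun i i' c hα hlt ↦ hG.eq_none_of_alpha _ _ _ hα (h.strictMono hlt),
    fun i c hlt hα hβ ↦ hG.ne_none _ _ ((h.particle_iff _).2 ⟨i, rfl⟩) ((h.hole_iff _).2 ⟨c, rfl⟩)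
      (h.val_lt_card_iff.1 hlt) (fun p hp hpα ↦ ?_) fun q hq hqβ ↦ ?_⟩
  · obtain ⟨i', rfl⟩ := (h.particle_iff p).1 (hG.box_of_eq_some hpα).1
    exact hα i' (h.strictMono.lt_iff_lt.1 hp) hpα
  · obtain ⟨c', rfl⟩ := (h.hole_iff q).1 (hG.box_of_eq_some hqβ).2.1
    exact hβ c' (h.strictAnti.lt_iff_gt.1 hq)
      (h.val_lt_card_iff.2 (hG.box_of_eq_some hqβ).2.2) hqβ

lemma prod_cellWeight {R : Type*} [CommRing R] (h : IsLabelling τ e f) (a b : R)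
    {G : Fin n → Fin n → Option Bool}
    (hG : ∀ p q, ¬(τ p = true ∧ τ q = false) → G p q = none) :
    ∏ i, ∏ c, cellWeight a b (G (e i) (f c)) = ∏ p, ∏ q, cellWeight a b (G p q) := by
  refine (Fintype.prod_of_injective e h.strictMono.injective _ _ (fun p hp ↦ ?_) fun i ↦
    Fintype.prod_of_injective f h.strictAnti.injective _ _ (fun q hq ↦ ?_) fun _ ↦ rfl)
  · exact prod_eq_one fun q _ ↦ by
      rw [hG p q fun hpq ↦ hp ((h.particle_iff p).1 hpq.1), cellWeight]
  · rw [hG _ q fun hpq ↦ hq ((h.hole_iff q).1 hpq.2), cellWeight]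

lemma sum_isCCT {R : Type*} [CommRing R] (h : IsLabelling τ e f) (a b : R) :
    ∑ F with IsCCT k w (fun i ↦ #{q | τ q = false ∧ e i < q}) F,
        ∏ i, ∏ c, cellWeight a b (F i c) =
      ∑ G with IsWordTableau τ G, ∏ p, ∏ q, cellWeight a b (G p q) := by
  refine sum_nbij' (spread e f) (fun G i c ↦ G (e i) (f c)) ?_ ?_ ?_ ?_ ?_
  · simp only [mem_filter_univ]
    exact fun F ↦ h.isWordTableau_spread
  · simp only [mem_filter_univ]
    exact fun G ↦ h.isCCT_of_isWordTableau
  · exact fun F _ ↦ funext₂ (h.spread_apply F)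
  · simp only [mem_filter_univ]
    exact fun G hG ↦ h.spread_restrict fun p q hpq ↦
      hG.eq_none_of_not_box p q fun hbox ↦ hpq ⟨hbox.1, hbox.2.1⟩
  · intro F _
    rw [← h.prod_cellWeight a b fun _ _ ↦ h.spread_eq_none F]
    simp only [h.spread_apply]

end IsLabelling

lemma statWeight_eq_tableauWeight (a b : ℝ) (τ : Fin n → Bool) :
    statWeight n a b τ = tableauWeight a b τ := by
  simp only [tableauWeight, fillingWeight]
  rw [← mul_sum, ← (isLabelling_orderIsoOfFin τ).sum_isCCT, prod_ite_particle, statWeight, mul_sum]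
  refine sum_congr rfl fun F _ ↦ ?_
  rw [← pow_aCount_mul_pow_bCount, pow_add, pow_add, mul_mul_mul_comm]

end Labelling

theorem stmt14_general {R : Type*} [CommRing R] {n : ℕ} (a b : R) (σ : Fin (n + 1) → Bool) :
    ∑ τ with τ ≠ σ, openRate a b τ σ * tableauWeight a b τ =
      tableauWeight a b σ * ∑ τ with τ ≠ σ, openRate a b σ τ :=
  (netFlow_eq_zero_iff _ _ σ).1 ((dehpRecursion_tableauWeight a b).netFlow_openRate σ)

/-- (Corteel–Williams, stationarity form) The tableaux-defined weights `P` form a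
stationary measure for the open-boundary TASEP: for every state `σ`, the global
balance equation holds. -/
theorem stmt14 (n : ℕ) (hn : 1 ≤ n) (a b : ℝ) (ha : 0 < a) (hb : 0 < b)
    (σ : Fin n → Bool) :
    ∑ τ ∈ Finset.univ.filter (fun τ : Fin n → Bool => τ ≠ σ),
        tasepRate n a b τ σ * statWeight n a b τ
      = statWeight n a b σ *
        ∑ τ' ∈ Finset.univ.filter (fun τ' : Fin n → Bool => τ' ≠ σ),
          tasepRate n a b σ τ' := by
  obtain ⟨m, rfl⟩ := Nat.exists_eq_add_of_le' hn
  simpa only [tasepRate_eq_openRate, statWeight_eq_tableauWeight] using stmt14_general a b σ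
end
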